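/- Let 𝔤 be a finite-dimensional complex simple Lie algebra of type E6 and let (e,h,f) be an sl2-triple in 𝔤 such that e is a distinguished nilpotent element with dim 𝔤^e = 12. Then the centre 𝔷(𝔤^e) of 𝔤^e has dimension 4, the eigenvalues of the restriction of ad h to 𝔷(𝔤^e) are 2, 8 and 10 (the eigenvalue 10 occurring with multiplicity 2), and e satisfies property (P). -/

import Mathlib

/-!
Choose a Chevalley basis of `L` and a Cartan subalgebra containing `h`, and move `h` into the
dominant Weyl chamber; the values of the simple roots at `h` then lie in `{0, 1, 2}`. Since `e` is
distinguished, no nonzero vector of weight `0` is killed by `e`, so `dim 𝔤(2) = dim 𝔤(0)`, while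
`sl₂`-theory gives `dim 𝔤^e = dim 𝔤(0) + dim 𝔤(1)`. Counting roots, the only labels compatible with
`dim 𝔤^e = 12` are `2, 0, 0, 2, 0, 2`. The elements of `𝔤(2)` that belong to an `sl₂`-triple with
this `h` form a single orbit of the centralizer of `h`, because each of their orbits is open in
`𝔤(2)`; hence `(e, h, f)` may be taken to be one explicit triple. For that triple the centralizer
has a basis `z₀ = e, z₁, z₂, z₃, u₀, …, u₇` with `z₀, …, z₃` central of weights `2, 8, 10, 10`, and
the brackets `⁅⁅f, x⁆, v⁆`, for `v` central and `x` among the `zᵢ` and `uᵢ`, exhibit `z₂` and `z₃`.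
The computations take place in the minuscule representation of dimension `27`.
-/

open scoped ComplexOrder

/-- The centralizer `𝔤^e = {x ∈ 𝔤 : ⁅x, e⁆ = 0}` of an element `e`, as a Lie subalgebra. -/
def centralizer (L : Type*) [LieRing L] [LieAlgebra ℂ L] (e : L) : LieSubalgebra ℂ L where
  carrier := {x : L | ⁅x, e⁆ = 0}
  add_mem' := fun {a b} ha hb => by
    simp only [Set.mem_setOf_eq] at *
    rw [add_lie, ha, hb, add_zero]
  zero_mem' := by simp
  smul_mem' := fun c a ha => by
    simp only [Set.mem_setOf_eq] at *
    rw [smul_lie, ha, smul_zero]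
  lie_mem' := fun {a b} ha hb => by
    simp only [Set.mem_setOf_eq] at *
    simp [lie_lie, ha, hb]

/-- Membership in the centre `𝔷(𝔤^e)` of the centralizer of `e`:
`v` centralizes `e` and commutes with every element of `𝔤^e`. -/
def InCenterOfCentralizer (L : Type*) [LieRing L] [LieAlgebra ℂ L] (e v : L) : Prop :=
  ⁅v, e⁆ = 0 ∧ ∀ y : L, ⁅y, e⁆ = 0 → ⁅v, y⁆ = 0

/-- The centre `𝔷(𝔤^e)` of the centralizer of `e`, as a subspace of `L`. -/
def zCenter (L : Type*) [LieRing L] [LieAlgebra ℂ L] (e : L) : Submodule ℂ L where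
  carrier := {v : L | ⁅v, e⁆ = 0 ∧ ∀ y : L, ⁅y, e⁆ = 0 → ⁅v, y⁆ = 0}
  add_mem' := fun {a b} ha hb => ⟨by rw [add_lie, ha.1, hb.1, add_zero],
    fun y hy => by rw [add_lie, ha.2 y hy, hb.2 y hy, add_zero]⟩
  zero_mem' := ⟨zero_lie e, fun y _ => zero_lie y⟩
  smul_mem' := fun c a ha => ⟨by rw [smul_lie, ha.1, smul_zero],
    fun y hy => by rw [smul_lie, ha.2 y hy, smul_zero]⟩

/-- Property (P) for an `sl₂`-triple `(e, h, f)`: for every nonzero `v ∈ 𝔷(𝔤^e)`, the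
eigenspace `𝔷_max` of the restriction of `ad h` to `𝔷(𝔤^e)` for its largest eigenvalue is
contained in `[[f, 𝔤^e], v] = {⁅⁅f, x⁆, v⁆ : x ∈ 𝔤^e}`. -/
def PropertyP (L : Type*) [LieRing L] [LieAlgebra ℂ L] (e h f : L) : Prop :=
  ∀ m : ℂ,
    (∃ z : L, z ≠ 0 ∧ InCenterOfCentralizer L e z ∧ ⁅h, z⁆ = m • z) →
    (∀ m' : ℂ, (∃ z : L, z ≠ 0 ∧ InCenterOfCentralizer L e z ∧ ⁅h, z⁆ = m' • z) → m' ≤ m) →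
    ∀ v : L, InCenterOfCentralizer L e v → v ≠ 0 →
      ∀ z : L, InCenterOfCentralizer L e z → ⁅h, z⁆ = m • z →
        ∃ x : L, ⁅x, e⁆ = 0 ∧ ⁅⁅f, x⁆, v⁆ = z

/-- The stabilizer `{x ∈ 𝔮 : ξ(⁅x, y⁆) = 0 for all y ∈ 𝔮}` of a linear functional `ξ`. -/
def coadStab (Q : Type*) [LieRing Q] [LieAlgebra ℂ Q] (ξ : Module.Dual ℂ Q) : Submodule ℂ Q where
  carrier := {x : Q | ∀ y : Q, ξ ⁅x, y⁆ = 0}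
  add_mem' := fun {a b} ha hb y => by rw [add_lie, map_add, ha y, hb y, add_zero]
  zero_mem' := fun y => by rw [zero_lie, map_zero]
  smul_mem' := fun c a ha y => by rw [smul_lie, map_smul, ha y, smul_zero]

/-- The index of a complex Lie algebra:
`ind 𝔮 = min_{ξ ∈ 𝔮*} dim {x ∈ 𝔮 : ξ(⁅x, y⁆) = 0 for all y ∈ 𝔮}`. -/
noncomputable def lieIndex (Q : Type*) [LieRing Q] [LieAlgebra ℂ Q] : ℕ :=
  ⨅ ξ : Module.Dual ℂ Q, Module.finrank ℂ ↥(coadStab Q ξ)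

/-- A nilpotent element `e` is distinguished if the only `x ∈ 𝔤^e` such that `ad x` is a
semisimple endomorphism of `𝔤` is `x = 0`. -/
def IsDistinguished (L : Type*) [LieRing L] [LieAlgebra ℂ L] (e : L) : Prop :=
  ∀ x : L, ⁅x, e⁆ = 0 → (LieAlgebra.ad ℂ L x).IsSemisimple → x = 0

namespace E6Orbit

open LieAlgebra LieModule Module Module.End

attribute [local instance] LieRing.ofAssociativeRing

/-! ### Modules over sl₂-triples -/

section Diagonalizable

variable {K V : Type*} [Field K] [AddCommGroup V] [Module K V] [FiniteDimensional K V]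

theorem isSemisimple_of_iSup_eigenspace_eq_top {φ : End K V}
    (hφ : ⨆ μ, φ.eigenspace μ = ⊤) : φ.IsSemisimple := by
  classical
  let S : Finset K := φ.finite_hasEigenvalue.toFinset
  let p : Polynomial K := ∏ μ ∈ S, (Polynomial.X - Polynomial.C μ)
  have hp : p.Separable :=
    Polynomial.separable_prod_X_sub_C_iff' (s := S) |>.2 fun x _ y _ h => h
  refine isSemisimple_of_squarefree_aeval_eq_zero hp.squarefree (LinearMap.ext fun v => ?_)
  have hv : v ∈ ⨆ μ, φ.eigenspace μ := hφ ▸ Submodule.mem_top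
  induction hv using Submodule.iSup_induction' with
  | zero => simp
  | add v w _ _ hv hw => rw [map_add, hv, hw, map_add]
  | mem μ v hv =>
    rcases eq_or_ne v 0 with rfl | hv0
    · simp
    have hμ : HasEigenvector φ μ v := ⟨hv, hv0⟩
    rw [aeval_apply_of_hasEigenvector hμ, Polynomial.eval_prod,
      Finset.prod_eq_zero (i := μ) (by simpa [S] using hasEigenvalue_of_hasEigenvector hμ)
        (by simp), zero_smul, LinearMap.zero_apply]

end Diagonalizable

section Weights

variable {K L M : Type*} [Field K] [LieRing L] [LieAlgebra K L] [AddCommGroup M] [Module K M]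
  [LieRingModule L M] [LieModule K L M]

theorem lie_lie_eq_smul {h x : L} {v : M} {μ ν : K} (hx : ⁅h, x⁆ = μ • x) (hv : ⁅h, v⁆ = ν • v) :
    ⁅h, ⁅x, v⁆⁆ = (μ + ν) • ⁅x, v⁆ := by
  rw [leibniz_lie, hx, hv, smul_lie, lie_smul, add_smul]

theorem mem_maxGenEigenspace_of_lie_eq_smul {h : L} {v : M} {μ : K} (hv : ⁅h, v⁆ = μ • v) :
    v ∈ (toEnd K L M h).maxGenEigenspace μ :=
  (mem_maxGenEigenspace _ _ _).2 ⟨1, by simp [hv]⟩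

theorem lie_mem_maxGenEigenspace {h x : L} {v : M} {μ ν : K} (hx : ⁅h, x⁆ = μ • x)
    (hv : v ∈ (toEnd K L M h).maxGenEigenspace ν) :
    ⁅x, v⁆ ∈ (toEnd K L M h).maxGenEigenspace (μ + ν) :=
  lie_mem_maxGenEigenspace_toEnd (mem_maxGenEigenspace_of_lie_eq_smul hx) hv

variable [CharZero K] [FiniteDimensional K M]

theorem isNilpotent_toEnd_of_lie_eq_smul {h x : L} {c : K} (hc : c ≠ 0) (hx : ⁅h, x⁆ = c • x) :
    IsNilpotent (toEnd K L M x) := by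
  let X := toEnd K L M x
  have hX : ⁅toEnd K L M h, X⁆ = c • X := by rw [← LieHom.map_lie, hx, map_smul]
  have hpow (n : ℕ) : ⁅toEnd K L M h, X ^ n⁆ = (n * c) • X ^ n := by
    induction n with
    | zero => simp [Ring.lie_def]
    | succ n ih =>
      have leibniz : ⁅toEnd K L M h, X ^ (n + 1)⁆
          = ⁅toEnd K L M h, X ^ n⁆ * X + X ^ n * ⁅toEnd K L M h, X⁆ := by
        simp only [Ring.lie_def, pow_succ]; noncomm_ring
      rw [leibniz, ih, hX, smul_mul_assoc, mul_smul_comm, ← pow_succ, ← add_smul]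
      push_cast; ring_nf
  by_contra hX0
  refine (Set.infinite_range_of_injective fun m n hmn => ?_ :
    (Set.range fun n : ℕ => n * c).Infinite) ((finite_hasEigenvalue
      (ad K (End K M) (toEnd K L M h))).subset ?_)
  · simpa [hc] using hmn
  · rintro _ ⟨n, rfl⟩
    exact hasEigenvalue_of_hasEigenvector (x := X ^ n)
      ⟨mem_eigenspace_iff.2 (hpow n), fun h0 => hX0 ⟨n, h0⟩⟩

end Weights

section Sl2

variable {K L M : Type*} [Field K] [LieRing L] [LieAlgebra K L] [AddCommGroup M] [Module K M]
  [LieRingModule L M] [LieModule K L M] {h e f : L}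

namespace Sl2

theorem lie_h_f (t : IsSl2Triple h e f) : ⁅h, f⁆ = (-2 : K) • f := by
  rw [t.lie_lie_smul_f K, neg_smul]

theorem lie_h_pow_f (t : IsSl2Triple h e f) (k : ℕ) (y : M) :
    ⁅h, (toEnd K L M f ^ k) y⁆ = (toEnd K L M f ^ k) (⁅h, y⁆ - (2 * k : K) • y) := by
  induction k with
  | zero => simp
  | succ k ih =>
    rw [pow_succ', Module.End.mul_apply, toEnd_apply_apply, leibniz_lie, lie_h_f (K := K) t, ih,
      smul_lie, Module.End.mul_apply, toEnd_apply_apply]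
    simp only [map_sub, lie_sub, map_smul, lie_smul]
    push_cast
    module

theorem lie_e_pow_succ_f (t : IsSl2Triple h e f) (k : ℕ) (y : M) :
    ⁅e, (toEnd K L M f ^ (k + 1)) y⁆ = (toEnd K L M f ^ (k + 1)) ⁅e, y⁆
      + (k + 1 : K) • (toEnd K L M f ^ k) (⁅h, y⁆ - (k : K) • y) := by
  induction k with
  | zero => simp [leibniz_lie e f, t.lie_e_f, add_comm]
  | succ k ih =>
    rw [← IsSl2Triple.lie_e_pow_toEnd_e (k + 1), leibniz_lie, t.lie_e_f, ih,
      lie_h_pow_f (K := K) t, lie_add, lie_smul]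
    simp only [map_sub, lie_sub, map_smul, lie_smul, IsSl2Triple.lie_e_pow_toEnd_e]
    push_cast
    module

theorem pow_f_mem_maxGenEigenspace (t : IsSl2Triple h e f) {y : M} {μ : K}
    (hy : y ∈ (toEnd K L M h).maxGenEigenspace μ) (k : ℕ) :
    (toEnd K L M f ^ k) y ∈ (toEnd K L M h).maxGenEigenspace (μ - 2 * k) := by
  induction k with
  | zero => simpa using hy
  | succ k ih =>
    rw [← IsSl2Triple.lie_e_pow_toEnd_e]
    convert lie_mem_maxGenEigenspace (lie_h_f t) ih using 2
    push_cast; ring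

theorem eq_zero_of_lie_eq_smul_of_mem_maxGenEigenspace {y : M} {μ ν : K} (hμν : μ ≠ ν)
    (hy : y ∈ (toEnd K L M h).maxGenEigenspace μ) (hν : ⁅h, y⁆ = ν • y) : y = 0 :=
  (Submodule.disjoint_def.1 (disjoint_genEigenspace (toEnd K L M h) hμν ⊤ ⊤)) y hy <|
    mem_maxGenEigenspace_of_lie_eq_smul hν

variable [CharZero K]

theorem pow_f_lie_h_sub_eq_zero (t : IsSl2Triple h e f) {y : M} {k : ℕ}
    (hy : (toEnd K L M f ^ (k + 1)) y = 0) (he : (toEnd K L M f ^ (k + 1)) ⁅e, y⁆ = 0) :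
    (toEnd K L M f ^ k) (⁅h, y⁆ - (k : K) • y) = 0 := by
  have h0 := lie_e_pow_succ_f (K := K) t k y
  rw [hy, he, lie_zero, zero_add, eq_comm] at h0
  exact (smul_eq_zero.1 h0).resolve_left (Nat.cast_add_one_ne_zero k)

theorem pow_f_apply_eq_zero (t : IsSl2Triple h e f) {y : M} {μ : K}
    (hy : y ∈ (toEnd K L M h).maxGenEigenspace μ) (hfe : ⁅f, ⁅e, y⁆⁆ = 0) {k₀ k₁ : ℕ}
    (hk : k₀ ≤ k₁) (hμ : ∀ k : ℕ, k₀ ≤ k → k < k₁ → μ ≠ k)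
    (hk₁ : (toEnd K L M f ^ k₁) y = 0) : (toEnd K L M f ^ k₀) y = 0 := by
  induction k₁, hk using Nat.le_induction with
  | base => exact hk₁
  | succ k hk ih =>
    refine ih (fun j hj hjk => hμ j hj (by omega)) ?_
    have hfke : (toEnd K L M f ^ (k + 1)) ⁅e, y⁆ = 0 := by
      rw [pow_succ, Module.End.mul_apply, toEnd_apply_apply, hfe, map_zero]
    have hfkh := pow_f_lie_h_sub_eq_zero t hk₁ hfke
    refine eq_zero_of_lie_eq_smul_of_mem_maxGenEigenspace (μ := μ - 2 * k) (ν := -k)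
      (fun h0 => hμ k hk (by omega) (by linear_combination h0))
      (pow_f_mem_maxGenEigenspace t hy k) ?_
    rw [map_sub, map_smul] at hfkh
    rw [lie_h_pow_f (K := K) t, map_sub, map_smul, sub_eq_zero.1 hfkh]
    module

variable [FiniteDimensional K M]

theorem isNilpotent_toEnd_f (t : IsSl2Triple h e f) : IsNilpotent (toEnd K L M f) :=
  isNilpotent_toEnd_of_lie_eq_smul (neg_ne_zero.2 two_ne_zero) (lie_h_f (K := K) t)

theorem eq_zero_of_lie_f_lie_e_eq_zero (t : IsSl2Triple h e f) {y : M} {μ : K}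
    (hy : y ∈ (toEnd K L M h).maxGenEigenspace μ) (hμ : ∀ k : ℕ, μ ≠ k)
    (hfe : ⁅f, ⁅e, y⁆⁆ = 0) : y = 0 := by
  obtain ⟨n, hn⟩ := isNilpotent_toEnd_f (K := K) (M := M) t
  exact pow_f_apply_eq_zero t hy hfe (Nat.zero_le n) (fun k _ _ => hμ k) (by simp [hn])

theorem exists_lie_e_lie_f_eq (t : IsSl2Triple h e f) {z : M} {μ : K} (hz : ⁅h, z⁆ = μ • z)
    (hμ : ∀ k : ℕ, -μ ≠ k) : ∃ y : M, ⁅h, y⁆ = μ • y ∧ ⁅e, ⁅f, y⁆⁆ = z := by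
  have hmaps : ∀ y ∈ (toEnd K L M h).eigenspace μ,
      (toEnd K L M e * toEnd K L M f) y ∈ (toEnd K L M h).eigenspace μ := by
    intro y hy
    rw [mem_eigenspace_iff] at hy ⊢
    have := lie_lie_eq_smul (t.lie_h_e_smul K) (lie_lie_eq_smul (lie_h_f t) hy)
    simpa using this
  have hinj : Function.Injective ((toEnd K L M e * toEnd K L M f).restrict hmaps) := by
    rw [← LinearMap.ker_eq_bot, LinearMap.ker_eq_bot']
    rintro ⟨y, hy⟩ hy0
    ext
    rw [mem_eigenspace_iff, toEnd_apply_apply] at hy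
    refine eq_zero_of_lie_f_lie_e_eq_zero (K := K) t.symm (μ := -μ)
      (mem_maxGenEigenspace_of_lie_eq_smul (by rw [neg_lie, hy, neg_smul])) hμ ?_
    exact congrArg Subtype.val hy0
  obtain ⟨⟨y, hy⟩, hyz⟩ :=
    LinearMap.injective_iff_surjective.1 hinj ⟨z, mem_eigenspace_iff.2 hz⟩
  exact ⟨y, mem_eigenspace_iff.1 hy, congrArg Subtype.val hyz⟩

theorem lie_h_eq_smul_of_lie_e_eq_zero (t : IsSl2Triple h e f) {y : M} {μ : K}
    (hy : y ∈ (toEnd K L M h).maxGenEigenspace μ) (he : ⁅e, y⁆ = 0) : ⁅h, y⁆ = μ • y := by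
  by_cases hμ : ∃ k : ℕ, μ = k
  · obtain ⟨k, rfl⟩ := hμ
    obtain ⟨n, hn⟩ := isNilpotent_toEnd_f (K := K) (M := M) t
    have hfk : (toEnd K L M f ^ (k + 1)) y = 0 :=
      pow_f_apply_eq_zero t hy (by rw [he, lie_zero]) (Nat.le_add_right (k + 1) n)
        (fun j hj _ h0 => absurd (Nat.cast_injective h0) (by omega)) (by simp [pow_add, hn])
    have hfkh := pow_f_lie_h_sub_eq_zero t hfk (by rw [he, map_zero])
    have hmem : ⁅h, y⁆ - (k : K) • y ∈ (toEnd K L M h).maxGenEigenspace (k : K) :=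
      sub_mem (mapsTo_maxGenEigenspace_of_comm (Commute.refl _) _ hy) (Submodule.smul_mem _ _ hy)
    have heh : ⁅e, ⁅h, y⁆⁆ = 0 := by
      rw [leibniz_lie, ← lie_skew, t.lie_h_e_smul K, neg_lie, smul_lie, he, lie_zero]; simp
    refine sub_eq_zero.1 ?_
    simpa using pow_f_apply_eq_zero t hmem (by simp [heh, he]) (Nat.zero_le k)
      (fun j _ hj h0 => hj.ne' (Nat.cast_injective h0)) hfkh
  · push Not at hμ
    rw [eq_zero_of_lie_f_lie_e_eq_zero t hy hμ (by rw [he, lie_zero]), lie_zero, smul_zero]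

theorem lie_h_eq_smul_of_mem_maxGenEigenspace (t : IsSl2Triple h e f) {y : M} {μ : K}
    (hy : y ∈ (toEnd K L M h).maxGenEigenspace μ) : ⁅h, y⁆ = μ • y := by
  wlog hμ : ∀ k : ℕ, -(μ + 2) ≠ k generalizing h e f y μ
  · push Not at hμ
    obtain ⟨k, hk⟩ := hμ
    rw [← neg_inj, ← neg_lie, ← neg_smul]
    refine this t.symm ?_ fun j hj => ?_
    · rw [map_neg]
      obtain ⟨n, hn⟩ := (mem_maxGenEigenspace _ _ _).1 hy
      refine (mem_maxGenEigenspace _ _ _).2 ⟨n, ?_⟩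
      rw [show -toEnd K L M h - -μ • 1 = -(toEnd K L M h - μ • 1) by module, neg_pow]
      simp [hn]
    · have : ((k + 4 + j : ℕ) : K) = 0 := by push_cast; linear_combination -hk - hj
      exact absurd (Nat.cast_eq_zero.1 this) (by omega)
  obtain ⟨n, hn⟩ := isNilpotent_toEnd_f (K := K) (M := M) t.symm
  replace hn : (toEnd K L M e ^ n) y = 0 := by rw [hn, LinearMap.zero_apply]
  induction n generalizing y μ with
  | zero => rw [show y = 0 from hn, lie_zero, smul_zero]
  | succ n ih =>
    have hey : ⁅h, ⁅e, y⁆⁆ = (2 + μ) • ⁅e, y⁆ :=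
      ih (lie_mem_maxGenEigenspace (t.lie_h_e_smul K) hy)
        (fun k hk => hμ (k + 2) (by push_cast; linear_combination hk)) hn
    obtain ⟨z, hz, hez⟩ := exists_lie_e_lie_f_eq t hey fun k hk => hμ k (by rw [← hk]; ring)
    have hfz : ⁅h, ⁅f, z⁆⁆ = μ • ⁅f, z⁆ := by simpa using lie_lie_eq_smul (lie_h_f t) hz
    have hyz := lie_h_eq_smul_of_lie_e_eq_zero t (y := y - ⁅f, z⁆) (sub_mem hy
      (mem_maxGenEigenspace_of_lie_eq_smul hfz)) (by rw [lie_sub, hez, sub_self])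
    rwa [lie_sub, hfz, smul_sub, sub_left_inj] at hyz

theorem exists_int_eq_of_lie_h_eq_smul (t : IsSl2Triple h e f) {y : M} {μ : K}
    (hy : ⁅h, y⁆ = μ • y) (hy0 : y ≠ 0) : ∃ m : ℤ, μ = m := by
  obtain ⟨n, hn⟩ := isNilpotent_toEnd_f (K := K) (M := M) t.symm
  obtain ⟨k, hk, hk'⟩ := Nat.exists_not_and_succ_of_not_zero_of_exists
    (p := fun k => (toEnd K L M e ^ k) y = 0) hy0 ⟨n, by rw [hn, LinearMap.zero_apply]⟩
  obtain ⟨m, hm⟩ := IsSl2Triple.HasPrimitiveVectorWith.exists_nat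
    (t := t) (m := (toEnd K L M e ^ k) y) (μ := μ + 2 * k)
    ⟨hk, t.lie_h_pow_toEnd_e hy k, by rw [IsSl2Triple.lie_e_pow_toEnd_e, hk']⟩
  exact ⟨m - 2 * k, by push_cast; rw [← hm]; ring⟩

theorem exists_lie_e_eq (t : IsSl2Triple h e f) {z : M} {m : ℤ} (hm : 0 < m)
    (hz : ⁅h, z⁆ = (m : K) • z) : ∃ x : M, ⁅h, x⁆ = ((m - 2 : ℤ) : K) • x ∧ ⁅e, x⁆ = z := by
  obtain ⟨y, hy, hyz⟩ := exists_lie_e_lie_f_eq t hz fun k hk => by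
    have : -m = k := by exact_mod_cast hk
    omega
  refine ⟨⁅f, y⁆, ?_, hyz⟩
  rw [lie_lie_eq_smul (lie_h_f t) hy]
  push_cast
  ring_nf

theorem eq_zero_of_lie_e_eq_zero (t : IsSl2Triple h e f) {z : M} {m : ℤ} (hm : m < 0)
    (hz : ⁅h, z⁆ = (m : K) • z) (hez : ⁅e, z⁆ = 0) : z = 0 :=
  eq_zero_of_lie_f_lie_e_eq_zero t (mem_maxGenEigenspace_of_lie_eq_smul hz)
    (fun k hk => hm.not_ge <| by
      rw [show m = k by exact_mod_cast hk]; exact k.cast_nonneg)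
    (by rw [hez, lie_zero])

theorem eq_zero_of_lie_f_eq_zero (t : IsSl2Triple h e f) {z : M} {m : ℤ} (hm : 0 < m)
    (hz : ⁅h, z⁆ = (m : K) • z) (hfz : ⁅f, z⁆ = 0) : z = 0 :=
  eq_zero_of_lie_e_eq_zero (K := K) t.symm (neg_neg_of_pos hm)
    (by rw [neg_lie, hz, Int.cast_neg, neg_smul]) hfz

theorem map_e_eigenspace (t : IsSl2Triple h e f) (n : ℕ) :
    ((toEnd K L M h).eigenspace (n - 1 : K)).map (toEnd K L M e)
      = (toEnd K L M h).eigenspace ((n + 2 : ℕ) - 1 : K) := by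
  ext z
  simp only [Submodule.mem_map, mem_eigenspace_iff, toEnd_apply_apply]
  constructor
  · rintro ⟨y, hy, rfl⟩
    rw [lie_lie_eq_smul (t.lie_h_e_smul K) hy]
    push_cast; ring_nf
  · intro hz
    obtain ⟨x, hx, rfl⟩ := exists_lie_e_eq (K := K) t (m := n + 1) (by omega)
      (by rw [hz]; push_cast; ring_nf)
    exact ⟨x, by rw [hx]; push_cast; ring_nf, rfl⟩

theorem finrank_eigenspace_two_eq (t : IsSl2Triple h e f)
    (hinj : ∀ y : M, ⁅h, y⁆ = 0 → ⁅e, y⁆ = 0 → y = 0) :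
    finrank K ((toEnd K L M h).eigenspace 2) = finrank K ((toEnd K L M h).eigenspace 0) := by
  have hmap := map_e_eigenspace (K := K) (M := M) t 1
  rw [show ((1 : ℕ) - 1 : K) = 0 by norm_num, show ((1 + 2 : ℕ) - 1 : K) = 2 by norm_num] at hmap
  rw [← hmap, ← LinearMap.range_domRestrict]
  have hker : LinearMap.ker ((toEnd K L M e).domRestrict ((toEnd K L M h).eigenspace 0)) = ⊥ :=
    LinearMap.ker_eq_bot'.2 fun y hy =>
      Subtype.ext (hinj y (by simpa using mem_eigenspace_iff.1 y.2) hy)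
  exact LinearMap.finrank_range_of_inj (LinearMap.ker_eq_bot.1 hker)

variable [IsAlgClosed K]

theorem iSup_eigenspace_eq_top (t : IsSl2Triple h e f) :
    ⨆ μ, (toEnd K L M h).eigenspace μ = ⊤ :=
  top_le_iff.1 <| (iSup_maxGenEigenspace_eq_top (toEnd K L M h)).ge.trans <| iSup_mono fun _ _ hy =>
    mem_eigenspace_iff.2 (lie_h_eq_smul_of_mem_maxGenEigenspace t hy)

theorem ker_e_le_iSup_eigenspace (t : IsSl2Triple h e f) :
    LinearMap.ker (toEnd K L M e) ≤ ⨆ n : ℕ, (toEnd K L M h).eigenspace (n - 1 : K) := by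
  have hinv : ∀ y ∈ LinearMap.ker (toEnd K L M e),
      toEnd K L M h y ∈ LinearMap.ker (toEnd K L M e) := by
    intro y hy
    rw [LinearMap.mem_ker, toEnd_apply_apply] at hy ⊢
    rw [toEnd_apply_apply, leibniz_lie, ← lie_skew, t.lie_h_e_smul K, neg_lie, smul_lie, hy,
      lie_zero]
    simp
  rw [← inf_top_eq (LinearMap.ker _), ← iSup_eigenspace_eq_top (K := K) (M := M) t,
    Submodule.inf_iSup_genEigenspace hinv]
  refine iSup_le fun μ y ⟨hy, hyμ⟩ => ?_
  rcases eq_or_ne y 0 with rfl | hy0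
  · exact zero_mem _
  obtain ⟨n, rfl⟩ := IsSl2Triple.HasPrimitiveVectorWith.exists_nat (t := t) (m := y) (μ := μ)
    ⟨hy0, mem_eigenspace_iff.1 hyμ, hy⟩
  exact Submodule.mem_iSup_of_mem (n + 1) (by simpa using hyμ)

theorem finrank_ker_e (t : IsSl2Triple h e f) :
    finrank K (LinearMap.ker (toEnd K L M e))
      = finrank K ((toEnd K L M h).eigenspace (-1)) + finrank K ((toEnd K L M h).eigenspace 0) := by
  let V (n : ℕ) : Submodule K M := (toEnd K L M h).eigenspace (n - 1 : K)
  have hV : iSupIndep V := (eigenspaces_iSupIndep (toEnd K L M h)).comp fun m n hmn => by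
    simpa using hmn
  have finrank_step (k : ℕ) :
      finrank K ↥(⨆ n, V (n + k)) = finrank K (V k) + finrank K ↥(⨆ n, V (n + (k + 1))) := by
    have hsup : V k ⊔ ⨆ n, V (n + (k + 1)) = ⨆ n, V (n + k) := by
      simpa only [zero_add, add_right_comm, add_assoc] using sup_iSup_nat_succ fun n => V (n + k)
    have hdisj : Disjoint (V k) (⨆ n, V (n + (k + 1))) :=
      (hV k).mono_right (iSup_le fun n => le_iSup₂_of_le (n + (k + 1)) (by omega) le_rfl)
    rw [← hsup, ← Submodule.finrank_sup_add_finrank_inf_eq, hdisj.eq_bot, finrank_bot, add_zero]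
  have hmap : (⨆ n, V n).map (toEnd K L M e) = ⨆ n, V (n + 2) := by
    rw [Submodule.map_iSup]
    exact iSup_congr (map_e_eigenspace t)
  have hrank := LinearMap.finrank_range_add_finrank_ker ((toEnd K L M e).domRestrict (⨆ n, V n))
  rw [LinearMap.range_domRestrict, hmap, LinearMap.ker_domRestrict,
    (Submodule.comapSubtypeEquivOfLe (ker_e_le_iSup_eigenspace t)).finrank_eq] at hrank
  have h0 : finrank K ↥(⨆ n, V n) = finrank K (V 0) + finrank K ↥(⨆ n, V (n + 1)) :=
    finrank_step 0
  have h1 : finrank K ↥(⨆ n, V (n + 1)) = finrank K (V 1) + finrank K ↥(⨆ n, V (n + 2)) :=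
    finrank_step 1
  have hV0 : V 0 = (toEnd K L M h).eigenspace (-1) := by simp [V]
  have hV1 : V 1 = (toEnd K L M h).eigenspace 0 := by simp [V]
  rw [hV0] at h0
  rw [hV1] at h1
  omega

end Sl2
end Sl2

section Killing

variable {K L : Type*} [Field K] [IsAlgClosed K] [CharZero K] [LieRing L] [LieAlgebra K L]
  [FiniteDimensional K L]

theorem exists_isSemisimple_isNilpotent_ad_sub [IsKilling K L] (x : L) :
    ∃ s : L, (ad K L s).IsSemisimple ∧ IsNilpotent (ad K L (x - s)) ∧
      ∀ (y : L) (μ : K), ⁅x, y⁆ = μ • y → ⁅s, y⁆ = μ • y := by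
  obtain ⟨N, -, S, hS, hN, hSs, hx⟩ := (ad K L x).exists_isNilpotent_isSemisimple
  have hS_apply (μ : K) (y : L) (hy : y ∈ (ad K L x).maxGenEigenspace μ) : S y = μ • y :=
    apply_eq_of_mem_of_comm_of_isFinitelySemisimple_of_isNil hy
      (Algebra.commute_of_mem_adjoin_self hS) hSs.isFinitelySemisimple
      (by rwa [hx, add_sub_cancel_right])
  have htop := iSup_maxGenEigenspace_eq_top (ad K L x)
  have leibniz (a b : L) : S ⁅a, b⁆ = ⁅a, S b⁆ - ⁅b, S a⁆ := by
    have ha : a ∈ ⨆ μ, (ad K L x).maxGenEigenspace μ := htop ▸ Submodule.mem_top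
    have hb : b ∈ ⨆ μ, (ad K L x).maxGenEigenspace μ := htop ▸ Submodule.mem_top
    induction ha using Submodule.iSup_induction' with
    | zero => simp
    | add a₁ a₂ _ _ h₁ h₂ => simp only [add_lie, map_add, h₁, h₂, lie_add]; abel
    | mem μ a ha =>
      induction hb using Submodule.iSup_induction' with
      | zero => simp
      | add b₁ b₂ _ _ h₁ h₂ => simp only [add_lie, map_add, h₁, h₂, lie_add]; abel
      | mem ν b hb =>
        rw [hS_apply _ _ ha, hS_apply _ _ hb,
          hS_apply (μ + ν) _ (lie_mem_maxGenEigenspace_toEnd ha hb), lie_smul, lie_smul,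
          ← lie_skew a b]
        module
  obtain ⟨s, hs⟩ := LieDerivation.IsKilling.exists_eq_ad (⟨S, leibniz⟩ : LieDerivation K L L)
  have hsS : ad K L s = S := LinearMap.ext fun y => by simpa using LieDerivation.congr_fun hs y
  refine ⟨s, hsS ▸ hSs, ?_, fun y μ hy => ?_⟩
  · rwa [map_sub, hsS, hx, add_sub_cancel_right]
  · rw [← ad_apply K, hsS, hS_apply μ y (mem_maxGenEigenspace_of_lie_eq_smul hy)]

omit [IsAlgClosed K] [CharZero K] in
theorem killingForm_eq_zero_of_forall_isNilpotent (C : LieSubalgebra K L)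
    (hC : ∀ x ∈ C, IsNilpotent (ad K L x)) {x y : L} (hx : x ∈ C) (hy : y ∈ C) :
    killingForm K L x y = 0 := by
  have : LieModule.IsNilpotent C L :=
    (LieModule.isNilpotent_iff_forall (R := K)).2 fun z => hC z z.2
  exact LinearMap.congr_fun₂ (traceForm_eq_zero_of_isNilpotent K C L) ⟨x, hx⟩ ⟨y, hy⟩

end Killing

section Distinguished

variable {L : Type*} [LieRing L] [LieAlgebra ℂ L] [FiniteDimensional ℂ L] {h e f : L}

theorem isNilpotent_ad_of_isDistinguished [IsKilling ℂ L] (hdist : IsDistinguished L e) {x : L}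
    (hx : ⁅x, e⁆ = 0) : IsNilpotent (ad ℂ L x) := by
  obtain ⟨s, hs, hxs, hs_apply⟩ := exists_isSemisimple_isNilpotent_ad_sub (K := ℂ) x
  have hse : ⁅s, e⁆ = 0 := by simpa using hs_apply e 0 (by rw [hx, zero_smul])
  rwa [hdist s hse hs, sub_zero] at hxs

namespace Sl2

theorem lie_f_eq_zero (t : IsSl2Triple h e f) {x : L} (hhx : ⁅h, x⁆ = 0) (hex : ⁅e, x⁆ = 0) :
    ⁅f, x⁆ = 0 := by
  refine eq_zero_of_lie_e_eq_zero (K := ℂ) t (m := -2) (by norm_num) ?_ ?_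
  · rw [leibniz_lie, lie_h_f (K := ℂ) t, hhx, lie_zero, add_zero, smul_lie]; norm_num
  · rw [leibniz_lie, t.lie_e_f, hhx, hex, lie_zero, add_zero]

theorem exists_sub_lie_f_mem (t : IsSl2Triple h e f) {z : L} (hz : ⁅h, z⁆ = 0) :
    ∃ y : L, z - ⁅f, y⁆ ∈ centralizer L e ⊓ centralizer L h := by
  have hez : ⁅h, ⁅e, z⁆⁆ = (2 : ℂ) • ⁅e, z⁆ := by
    simpa using lie_lie_eq_smul (t.lie_h_e_smul ℂ) (show ⁅h, z⁆ = (0 : ℂ) • z by rw [hz, zero_smul])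
  obtain ⟨y, hy, hyz⟩ := exists_lie_e_lie_f_eq t hez fun k hk => by
    have : ((k + 2 : ℕ) : ℂ) = 0 := by push_cast; rw [← hk]; ring
    exact absurd (Nat.cast_eq_zero.1 this) (by omega)
  have hfy : ⁅h, ⁅f, y⁆⁆ = 0 := by simpa using lie_lie_eq_smul (lie_h_f t) hy
  refine ⟨y, show ⁅_, e⁆ = 0 from ?_, show ⁅_, h⁆ = 0 from ?_⟩
  · rw [← lie_skew, lie_sub, hyz, sub_self, neg_zero]
  · rw [← lie_skew, lie_sub, hz, hfy, sub_self, neg_zero]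

end Sl2

theorem eq_zero_of_isDistinguished [IsKilling ℂ L] (hdist : IsDistinguished L e)
    (t : IsSl2Triple h e f) {x : L} (hhx : ⁅h, x⁆ = 0) (hex : ⁅e, x⁆ = 0) : x = 0 := by
  have hxe : ⁅x, e⁆ = 0 := by rw [← lie_skew, hex, neg_zero]
  have hxh : ⁅x, h⁆ = 0 := by rw [← lie_skew, hhx, neg_zero]
  have hxf : ⁅x, f⁆ = 0 := by rw [← lie_skew, Sl2.lie_f_eq_zero t hhx hex, neg_zero]
  suffices x ∈ LinearMap.ker (killingForm ℂ L) by simpa using this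
  refine LinearMap.mem_ker.2 (LinearMap.ext fun z => ?_)
  have hz : z ∈ ⨆ μ, (ad ℂ L h).eigenspace μ :=
    Sl2.iSup_eigenspace_eq_top (K := ℂ) (M := L) t ▸ Submodule.mem_top
  induction hz using Submodule.iSup_induction' with
  | zero => simp
  | add a b _ _ ha hb => rw [map_add, ha, hb, map_add]
  | mem μ z hz =>
    replace hz : ⁅h, z⁆ = μ • z := mem_eigenspace_iff.1 hz
    rcases eq_or_ne μ 0 with rfl | hμ
    · obtain ⟨y, hy⟩ := Sl2.exists_sub_lie_f_mem t (hz.trans (zero_smul ℂ z))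
      have hxy := killingForm_eq_zero_of_forall_isNilpotent (K := ℂ)
        (centralizer L e ⊓ centralizer L h)
        (fun w hw => isNilpotent_ad_of_isDistinguished hdist hw.1) ⟨hxe, hxh⟩ hy
      rw [map_sub, ← traceForm_apply_lie_apply, hxf] at hxy
      simpa using hxy
    · have hxz := traceForm_apply_lie_apply ℂ L L x h z
      rw [hxh, hz] at hxz
      simpa [hμ] using hxz

end Distinguished

/-! ### Conjugacy of Cartan subalgebras and of sl₂-triples -/

open scoped Topology
open NormedSpace

section Exponential

variable {𝕜 V : Type*} [RCLike 𝕜] [NormedAddCommGroup V] [NormedSpace 𝕜 V] [FiniteDimensional 𝕜 V]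

theorem hasSum_exp_apply (A : V →L[𝕜] V) (x : V) :
    HasSum (fun n : ℕ => ((n.factorial : 𝕜)⁻¹) • (A ^ n) x) (exp A x) := by
  have : CompleteSpace V := FiniteDimensional.complete 𝕜 V
  exact (exp_series_hasSum_exp' (𝕂 := 𝕜) A).mapL (ContinuousLinearMap.apply 𝕜 V x)

theorem exp_apply_eq_self {A : V →L[𝕜] V} {x : V} (hx : A x = 0) : exp A x = x := by
  refine (hasSum_exp_apply A x).unique ?_
  convert hasSum_single (f := fun n : ℕ => ((n.factorial : 𝕜)⁻¹) • (A ^ n) x) 0 ?_ using 1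
  · simp
  · intro n hn
    obtain ⟨m, rfl⟩ := Nat.exists_eq_succ_of_ne_zero hn
    simp [pow_succ, hx]

theorem exp_apply_mem {A : V →L[𝕜] V} {W : Submodule 𝕜 V} (hA : ∀ w ∈ W, A w ∈ W) {w : V}
    (hw : w ∈ W) : exp A w ∈ W := by
  have hpow (n : ℕ) : (A ^ n) w ∈ W := by
    induction n with
    | zero => exact hw
    | succ n ih => rw [pow_succ']; exact hA _ ih
  exact W.closed_of_finiteDimensional.mem_of_tendsto (hasSum_exp_apply A w)
    (Filter.Eventually.of_forall fun s => W.sum_mem fun n _ => W.smul_mem _ (hpow n))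

theorem exp_apply_exp_neg_apply (A : V →L[𝕜] V) (x : V) : exp A (exp (-A) x) = x := by
  have : CompleteSpace V := FiniteDimensional.complete 𝕜 V
  let : NormedAlgebra ℚ (V →L[𝕜] V) := NormedAlgebra.restrictScalars ℚ 𝕜 _
  have h := NormedSpace.exp_add_of_commute ((Commute.refl A).neg_right)
  rw [add_neg_cancel, exp_zero] at h
  exact (congrArg (· x) h).symm

theorem hasDerivAt_exp_smul_apply (D : V →L[𝕜] V) (x : V) (t : 𝕜) :
    HasDerivAt (fun t : 𝕜 => exp (t • D) x) (D (exp (t • D) x)) t := by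
  have : CompleteSpace V := FiniteDimensional.complete 𝕜 V
  simpa using (hasDerivAt_exp_smul_const' (𝕂 := 𝕜) D t).clm_apply (hasDerivAt_const t x)

theorem exp_apply_bilinear (β : V →L[𝕜] V →L[𝕜] V) (D : V →L[𝕜] V)
    (hD : ∀ x y, D (β x y) = β (D x) y + β x (D y)) (x y : V) :
    exp D (β x y) = β (exp D x) (exp D y) := by
  have : CompleteSpace V := FiniteDimensional.complete 𝕜 V
  let φ : 𝕜 → V := fun t => exp (t • -D) (β (exp (t • D) x) (exp (t • D) y))
  have hφ (t : 𝕜) : HasDerivAt φ 0 t := by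
    have hβ : HasDerivAt (fun t : 𝕜 => β (exp (t • D) x) (exp (t • D) y))
        (D (β (exp (t • D) x) (exp (t • D) y))) t := by
      rw [hD]
      exact (β.hasFDerivAt.comp_hasDerivAt t (hasDerivAt_exp_smul_apply D x t)).clm_apply
        (hasDerivAt_exp_smul_apply D y t)
    convert (hasDerivAt_exp_smul_const (𝕂 := 𝕜) (-D) t).clm_apply hβ using 1
    simp
  have hconst : φ 1 = φ 0 := is_const_of_deriv_eq_zero (fun t => (hφ t).differentiableAt)
    (fun t => (hφ t).deriv) 1 0
  simp only [φ, one_smul, zero_smul, exp_zero, one_apply_eq_self] at hconst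
  rw [← hconst, exp_apply_exp_neg_apply]

theorem hasStrictFDerivAt_exp_apply_add (β : V →L[𝕜] V →L[𝕜] V) (s : V) :
    HasStrictFDerivAt (fun q : V × V => exp (β q.1) (s + q.2))
      ((β.flip s).coprod (ContinuousLinearMap.id 𝕜 V)) 0 := by
  have : CompleteSpace V := FiniteDimensional.complete 𝕜 V
  have hexp : HasStrictFDerivAt (fun q : V × V => exp (β q.1))
      (β ∘L ContinuousLinearMap.fst 𝕜 V V) 0 := by
    have h := hasStrictFDerivAt_exp_zero (𝕂 := 𝕜) (𝔸 := V →L[𝕜] V)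
    rw [← map_zero (β ∘L ContinuousLinearMap.fst 𝕜 V V)] at h
    exact h.comp 0 (β ∘L ContinuousLinearMap.fst 𝕜 V V).hasStrictFDerivAt
  have hadd : HasStrictFDerivAt (fun q : V × V => s + q.2) (ContinuousLinearMap.snd 𝕜 V V) 0 :=
    (ContinuousLinearMap.snd 𝕜 V V).hasStrictFDerivAt.const_add s
  refine (hexp.clm_apply hadd).congr_fderiv ?_
  ext <;> simp

theorem eventually_exists_exp_apply_eq (β : V →L[𝕜] V →L[𝕜] V) (Z Y W : Submodule 𝕜 V) {s d : V}
    (hs : s ∈ W) (hd : d ∈ W) (hZW : ∀ z ∈ Z, ∀ w ∈ W, β z w ∈ W) (hYW : Y ≤ W)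
    (hsurj : ∀ w ∈ W, ∃ z ∈ Z, ∃ y ∈ Y, β z s + y = w) :
    ∀ᶠ t in 𝓝 (0 : 𝕜), ∃ z ∈ Z, ∃ y ∈ Y, exp (β z) (s + y) = s + t • d := by
  have : CompleteSpace W := FiniteDimensional.complete 𝕜 W
  have : CompleteSpace (Z × Y) := FiniteDimensional.complete 𝕜 (Z × Y)
  obtain ⟨p, hp⟩ := W.subtype.exists_leftInverse_of_injective W.ker_subtype
  let π : V →L[𝕜] W := LinearMap.toContinuousLinearMap p
  have hπ (w : V) (hw : w ∈ W) : π w = ⟨w, hw⟩ := LinearMap.congr_fun hp ⟨w, hw⟩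
  let ι : Z × Y →L[𝕜] V × V := Z.subtypeL.prodMap Y.subtypeL
  let F : Z × Y → W := fun q => π (exp (β q.1) (s + q.2))
  have hF := π.hasStrictFDerivAt.comp 0 <| HasStrictFDerivAt.comp (f := ι) 0
    (by rw [map_zero]; exact hasStrictFDerivAt_exp_apply_add β s) ι.hasStrictFDerivAt
  have hopen : 𝓝 (F 0) = Filter.map F (𝓝 0) := by
    refine (hF.map_nhds_eq_of_surj (LinearMap.range_eq_top.2 ?_)).symm
    rintro ⟨w, hw⟩
    obtain ⟨z, hz, y, hy, h⟩ := hsurj w hw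
    exact ⟨(⟨z, hz⟩, ⟨y, hy⟩), by rw [← hπ w hw, ← h]; simp [ι]⟩
  have hline : Filter.Tendsto (fun t : 𝕜 => π (s + t • d)) (𝓝 0) (𝓝 (F 0)) := by
    have : Continuous fun t : 𝕜 => π (s + t • d) := by fun_prop
    simpa [F] using this.tendsto 0
  filter_upwards [hline (hopen ▸ Filter.range_mem_map)] with t ⟨⟨z, y⟩, hq⟩
  refine ⟨z, z.2, y, y.2, ?_⟩
  have hmem := exp_apply_mem (hZW z z.2) (W.add_mem hs (hYW y.2))
  exact congrArg Subtype.val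
    ((hπ _ hmem).symm.trans (hq.trans (hπ _ (W.add_mem hs (W.smul_mem t hd)))))

end Exponential

section OpenOrbit

variable {𝕜 L : Type*} [RCLike 𝕜] [LieRing L] [LieAlgebra 𝕜 L] [FiniteDimensional 𝕜 L]

-- The automorphisms are the `exp (ad z)` with `z ∈ Z`; the claim is the inverse function theorem
-- for `(z, y) ↦ exp (ad z) (s + y)` at `0`.
theorem eventually_exists_lieEquiv (Z Y W : Submodule 𝕜 L) {s d : L}
    (hs : s ∈ W) (hd : d ∈ W) (hZW : ∀ z ∈ Z, ∀ w ∈ W, ⁅z, w⁆ ∈ W) (hYW : Y ≤ W)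
    (hsurj : ∀ w ∈ W, ∃ z ∈ Z, ∃ y ∈ Y, ⁅z, s⁆ + y = w) :
    ∀ᶠ t in 𝓝 (0 : 𝕜), ∃ g : L ≃ₗ⁅𝕜⁆ L, (∃ y ∈ Y, g (s + y) = s + t • d) ∧
      ∀ x, (∀ z ∈ Z, ⁅z, x⁆ = 0) → g x = x := by
  let φ : L ≃ₗ[𝕜] (Fin (finrank 𝕜 L) → 𝕜) := (finBasis 𝕜 L).equivFun
  let : NormedAddCommGroup L := NormedAddCommGroup.induced L _ φ φ.injective
  let : NormedSpace 𝕜 L := NormedSpace.induced 𝕜 L _ φ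
  let β : L →L[𝕜] L →L[𝕜] L := LinearMap.toContinuousLinearMap
    ((LinearMap.toContinuousLinearMap : (L →ₗ[𝕜] L) ≃ₗ[𝕜] (L →L[𝕜] L)).toLinearMap ∘ₗ
      (ad 𝕜 L : L →ₗ[𝕜] End 𝕜 L))
  have hexp (z x y : L) : exp (β z) ⁅x, y⁆ = ⁅exp (β z) x, exp (β z) y⁆ :=
    exp_apply_bilinear β (β z) (fun x y => leibniz_lie z x y) x y
  have hinv (z x : L) : exp (β z) (exp (β (-z)) x) = x := by
    rw [map_neg, exp_apply_exp_neg_apply]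
  filter_upwards [eventually_exists_exp_apply_eq β Z Y W hs hd hZW hYW hsurj] with t
    ⟨z, hz, y, hy, h⟩
  let g : L ≃ₗ⁅𝕜⁆ L :=
    { toFun := fun x => exp (β z) x
      map_add' := (exp (β z)).map_add
      map_smul' := (exp (β z)).map_smul
      map_lie' := hexp z _ _
      invFun := fun x => exp (β (-z)) x
      left_inv := fun x => by simpa using hinv (-z) x
      right_inv := hinv z }
  exact ⟨g, ⟨y, hy, h⟩, fun x hx => exp_apply_eq_self (hx z hz)⟩

end OpenOrbit

section Pencil

theorem isPreconnected_compl_of_finite {s : Set ℂ} (hs : s.Finite) : IsPreconnected sᶜ :=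
  (hs.countable.isConnected_compl_of_one_lt_rank
    (by rw [Complex.rank_real_complex]; norm_num)).isPreconnected

-- A complex line minus finitely many points is connected, so a relation that holds locally along
-- the line joining `x` to `y` holds between `x` and `y`.
theorem rel_of_eventually_rel_add_smul {V : Type*} [AddCommGroup V] [Module ℂ V] {G : Set V}
    {r : V → V → Prop} (hr : Equivalence r) {x y : V} (hx : x ∈ G) (hy : y ∈ G)
    (hfin : {t : ℂ | x + t • (y - x) ∉ G}.Finite)
    (hloc : ∀ z ∈ G, ∀ᶠ t in 𝓝 (0 : ℂ), z + t • (y - x) ∈ G → r z (z + t • (y - x))) :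
    r x y := by
  let a : ℂ → V := fun t => x + t • (y - x)
  have h := (isPreconnected_compl_of_finite hfin).induction₂ (fun s t => r (a s) (a t))
    (x := 0) (y := 1) (fun s hs => ?_) (fun _ _ _ _ _ _ => hr.trans) (fun _ _ _ _ => hr.symm)
    (by simpa using hx) (by simpa using hy)
  · simpa [a] using h
  · have htend : Filter.Tendsto (fun t : ℂ => t - s) (𝓝 s) (𝓝 0) := by
      simpa using (continuous_sub_right s).tendsto s
    filter_upwards [nhdsWithin_le_nhds (htend.eventually (hloc (a s) (not_not.1 hs))),
      self_mem_nhdsWithin] with t hrt ht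
    have hst : a s + (t - s) • (y - x) = a t := by simp only [a]; module
    rw [hst] at hrt
    exact hrt (not_not.1 ht)

theorem finite_setOf_eval_add_smul_eq_zero {K ι : Type*} [Field K] (p : MvPolynomial ι K)
    (a d : ι → K) {t₀ : K} (h : MvPolynomial.eval (a + t₀ • d) p ≠ 0) :
    {t : K | MvPolynomial.eval (a + t • d) p = 0}.Finite := by
  let q : Polynomial K :=
    MvPolynomial.aeval (fun i => Polynomial.C (a i) + Polynomial.X * Polynomial.C (d i)) p
  have hq (t : K) : q.eval t = MvPolynomial.eval (a + t • d) p := by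
    change _ = MvPolynomial.aeval (a + t • d) p
    rw [← Polynomial.coe_aeval_eq_eval, ← AlgHom.comp_apply]
    congr 1
    ext i
    simpa using mul_comm _ _
  have hq0 : q ≠ 0 := fun h0 => h (by rw [← hq, h0, Polynomial.eval_zero])
  exact (Polynomial.finite_setOfPred_isRoot hq0).subset fun t ht => (hq t).trans ht

theorem finite_setOf_not_surjective_add_smul {K V W : Type*} [Field K] [AddCommGroup V]
    [Module K V] [FiniteDimensional K V] [AddCommGroup W] [Module K W] {f : V →ₗ[K] W}
    (hf : Function.Bijective f) (g : V →ₗ[K] W) :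
    {t : K | ¬ Function.Surjective (f + t • g)}.Finite := by
  let φ : V ≃ₗ[K] W := LinearEquiv.ofBijective f hf
  let B : End K V := φ.symm.toLinearMap ∘ₗ g
  refine ((finite_hasEigenvalue B).image fun μ => -μ⁻¹).subset fun t ht => ?_
  have hcomp : f + t • g = φ.toLinearMap ∘ₗ (1 + t • B) := by
    ext x
    simp [B, φ]
  have hinj : ¬ Function.Injective (1 + t • B : End K V) := fun hi => ht <| by
    rw [hcomp, LinearMap.coe_comp]
    exact φ.surjective.comp (LinearMap.injective_iff_surjective.1 hi)
  rw [← LinearMap.ker_eq_bot, Submodule.eq_bot_iff] at hinj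
  push Not at hinj
  obtain ⟨x, hx, hx0⟩ := hinj
  have hx' : x + t • B x = 0 := hx
  have ht0 : t ≠ 0 := by
    rintro rfl
    exact hx0 (by simpa using hx')
  refine ⟨-t⁻¹, hasEigenvalue_of_hasEigenvector (x := x) ⟨?_, hx0⟩, by simp⟩
  rw [mem_eigenspace_iff, neg_smul, ← smul_neg, ← eq_neg_of_add_eq_zero_right hx',
    inv_smul_smul₀ ht0]

end Pencil

section Regular

theorem mem_engel_iff_lie_eq_zero {K L : Type*} [Field K] [LieRing L] [LieAlgebra K L]
    {x : L} (hx : (ad K L x).IsSemisimple) (y : L) :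
    y ∈ LieSubalgebra.engel K x ↔ ⁅x, y⁆ = 0 := by
  have hgen := hx.isFinitelySemisimple.maxGenEigenspace_eq_eigenspace 0
  have hmem := SetLike.ext_iff.1 hgen y
  rwa [mem_eigenspace_iff, zero_smul, mem_maxGenEigenspace, zero_smul, sub_zero,
    ← LieSubalgebra.mem_engel_iff] at hmem

variable {K L : Type*} [Field K] [LieRing L] [LieAlgebra K L] [FiniteDimensional K L]

theorem finite_setOf_not_isRegular (a d : L) {t₀ : K}
    (h : IsRegular K (a + t₀ • d)) : {t : K | ¬ IsRegular K (a + t • d)}.Finite := by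
  classical
  let b := finBasis K L
  have hreg (t : K) : IsRegular K (a + t • d) ↔ MvPolynomial.eval (⇑(b.repr a) + t • ⇑(b.repr d))
      ((LinearMap.polyCharpoly (ad K L : L →ₗ[K] End K L) b).coeff (rank K L)) ≠ 0 := by
    rw [isRegular_iff_coeff_polyCharpoly_rank_ne_zero K b, map_add, map_smul]
    rfl
  simp only [hreg, not_not]
  exact finite_setOf_eval_add_smul_eq_zero _ _ _ ((hreg t₀).1 h)

theorem isRegular_lieEquiv_apply (g : L ≃ₗ⁅K⁆ L) {x : L} : IsRegular K (g x) ↔ IsRegular K x := by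
  rw [LieAlgebra.isRegular_def, LieAlgebra.isRegular_def, ← LieAlgebra.conj_ad_apply,
    LinearEquiv.charpoly_conj]

theorem isCartanSubalgebra_engel_of_isRegular [Infinite K] {x : L} (hx : IsRegular K x) :
    (LieSubalgebra.engel K x).IsCartanSubalgebra := by
  refine ⟨LieSubalgebra.isNilpotent_of_forall_le_engel _ fun y hy => ?_,
    LieSubalgebra.normalizer_engel _ _⟩
  let E : {LieSubalgebra.engel K z | z ∈ LieSubalgebra.engel K x} :=
    ⟨LieSubalgebra.engel K x, x, LieSubalgebra.self_mem_engel _ _, rfl⟩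
  suffices hE : IsBot E from @hE ⟨LieSubalgebra.engel K y, y, hy, rfl⟩
  refine engel_isBot_of_isMin (Cardinal.natCast_le_aleph0.trans <|
    Cardinal.infinite_iff.mp inferInstance) (LieSubalgebra.engel K x) E le_rfl ?_
  rintro ⟨_, y, hy, rfl⟩ hyx
  have hfinrank : finrank K (LieSubalgebra.engel K x) ≤ finrank K (LieSubalgebra.engel K y) := by
    rw [(isRegular_iff_finrank_engel_eq_rank K x).mp hx]
    exact rank_le_finrank_engel K y
  exact (LieSubalgebra.toSubmodule_injective
    (Submodule.eq_of_le_of_finrank_le hyx hfinrank)).ge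

theorem isCompl_ker_range_of_isSemisimple {V : Type*} [AddCommGroup V] [Module K V]
    [FiniteDimensional K V] {φ : End K V} (hφ : φ.IsSemisimple) :
    IsCompl (LinearMap.ker φ) (LinearMap.range φ) := by
  have hdisj : Disjoint (LinearMap.ker φ) (LinearMap.range φ) := by
    rw [Submodule.disjoint_def]
    rintro _ hx ⟨y, rfl⟩
    have hy : y ∈ φ.maxGenEigenspace 0 := mem_maxGenEigenspace _ _ _ |>.2
      ⟨2, by simpa [pow_two] using hx⟩
    rw [hφ.isFinitelySemisimple.maxGenEigenspace_eq_eigenspace, mem_eigenspace_iff] at hy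
    rw [hy, zero_smul]
  exact ⟨hdisj, codisjoint_iff.2 (Submodule.eq_top_of_disjoint _ _
    ((add_comm _ _).trans (LinearMap.finrank_range_add_finrank_ker φ)).ge hdisj)⟩

end Regular

section SemisimpleConjugacy

variable {L : Type*} [LieRing L] [LieAlgebra ℂ L] [FiniteDimensional ℂ L]

theorem eventually_exists_lieEquiv_of_isSemisimple {x : L} (hx : (ad ℂ L x).IsSemisimple) (d : L) :
    ∀ᶠ t in 𝓝 (0 : ℂ), ∃ g : L ≃ₗ⁅ℂ⁆ L, ∃ y : L, ⁅x, y⁆ = 0 ∧ g (x + y) = x + t • d := by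
  have hsurj (w : L) : ∃ z ∈ (⊤ : Submodule ℂ L), ∃ y ∈ LinearMap.ker (ad ℂ L x),
      ⁅z, x⁆ + y = w := by
    obtain ⟨y, hy, _, ⟨z, rfl⟩, rfl⟩ := Submodule.mem_sup.1
      ((isCompl_ker_range_of_isSemisimple hx).sup_eq_top ▸ Submodule.mem_top (x := w))
    exact ⟨-z, trivial, y, hy, by rw [neg_lie, lie_skew, add_comm, ad_apply]⟩
  filter_upwards [eventually_exists_lieEquiv ⊤ (LinearMap.ker (ad ℂ L x)) ⊤ (s := x) (d := d)
    trivial trivial (fun _ _ _ _ => trivial) le_top (fun w _ => hsurj w)] with t ⟨g, ⟨y, hy, hg⟩, _⟩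
  exact ⟨g, y, hy, hg⟩

theorem exists_isRegular_lie_eq_zero {x : L} (hx : (ad ℂ L x).IsSemisimple) :
    ∃ u : L, IsRegular ℂ u ∧ ⁅x, u⁆ = 0 := by
  obtain ⟨v, hv⟩ := LieAlgebra.exists_isRegular ℂ L
  have hfin := finite_setOf_not_isRegular x (v - x) (t₀ := (1 : ℂ)) (by simpa using hv)
  have hreg : ∃ᶠ t in 𝓝 (0 : ℂ), IsRegular ℂ (x + t • (v - x)) :=
    ((hfin.eventually_cofinite_notMem.filter_mono (nhdsNE_le_cofinite 0)).mono
      fun _ => not_not.1).frequently.filter_mono nhdsWithin_le_nhds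
  obtain ⟨t, ht, g, y, hy, hg⟩ :=
    (hreg.and_eventually (eventually_exists_lieEquiv_of_isSemisimple hx (v - x))).exists
  refine ⟨x + y, (isRegular_lieEquiv_apply g).1 (hg ▸ ht), ?_⟩
  rw [lie_add, lie_self, hy, add_zero]

variable [IsKilling ℂ L]

theorem isSemisimple_ad_of_isRegular {x : L} (hx : IsRegular ℂ x) : (ad ℂ L x).IsSemisimple := by
  have := isCartanSubalgebra_engel_of_isRegular hx
  exact LieAlgebra.IsKilling.isSemisimple_ad_of_mem_isCartanSubalgebra
    (H := LieSubalgebra.engel ℂ x) (LieSubalgebra.self_mem_engel ℂ x)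

theorem lie_eq_zero_of_isRegular {x : L} (hx : IsRegular ℂ x) {a b : L} (ha : ⁅x, a⁆ = 0)
    (hb : ⁅x, b⁆ = 0) : ⁅a, b⁆ = 0 := by
  have := isCartanSubalgebra_engel_of_isRegular hx
  have hs := isSemisimple_ad_of_isRegular hx
  have h := trivial_lie_zero (LieSubalgebra.engel ℂ x) (LieSubalgebra.engel ℂ x)
    ⟨a, (mem_engel_iff_lie_eq_zero hs a).2 ha⟩ ⟨b, (mem_engel_iff_lie_eq_zero hs b).2 hb⟩
  exact congrArg Subtype.val h

theorem lie_eq_zero_iff_of_isRegular {u v : L} (hu : IsRegular ℂ u) (hv : IsRegular ℂ v)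
    (huv : ⁅u, v⁆ = 0) (x : L) : ⁅u, x⁆ = 0 ↔ ⁅v, x⁆ = 0 :=
  ⟨fun hx => lie_eq_zero_of_isRegular hu huv hx,
    fun hx => lie_eq_zero_of_isRegular hv (by rw [← lie_skew, huv, neg_zero]) hx⟩

theorem exists_lieEquiv_of_isRegular {u v : L} (hu : IsRegular ℂ u) (hv : IsRegular ℂ v) :
    ∃ g : L ≃ₗ⁅ℂ⁆ L, ∀ x, ⁅u, x⁆ = 0 ↔ ⁅v, g x⁆ = 0 := by
  refine rel_of_eventually_rel_add_smul (G := {a | IsRegular ℂ a})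
    (r := fun a b => ∃ g : L ≃ₗ⁅ℂ⁆ L, ∀ x, ⁅a, x⁆ = 0 ↔ ⁅b, g x⁆ = 0)
    ⟨fun a => ⟨LieEquiv.refl, fun x => Iff.rfl⟩, ?_, ?_⟩ hu hv
    (finite_setOf_not_isRegular u (v - u) (t₀ := (1 : ℂ)) (by simpa using hv)) fun a ha => ?_
  · rintro a b ⟨g, hg⟩
    exact ⟨g.symm, fun w => by rw [hg, LieEquiv.apply_symm_apply]⟩
  · rintro a b c ⟨g, hg⟩ ⟨g', hg'⟩
    exact ⟨g.trans g', fun w => (hg w).trans (hg' _)⟩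
  · filter_upwards [eventually_exists_lieEquiv_of_isSemisimple
      (isSemisimple_ad_of_isRegular ha) (v - u)] with t ⟨g, y, hy, hg⟩ ht
    have hay : IsRegular ℂ (a + y) := (isRegular_lieEquiv_apply g).1 (hg ▸ ht)
    refine ⟨g, fun x => ?_⟩
    rw [lie_eq_zero_iff_of_isRegular ha hay (by rw [lie_add, lie_self, hy, add_zero]) x, ← hg,
      ← LieEquiv.map_lie]
    exact (EmbeddingLike.map_eq_zero_iff (f := g)).symm

theorem exists_lieEquiv_lie_eq_zero {h y : L} (hh : (ad ℂ L h).IsSemisimple)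
    (hy : (ad ℂ L y).IsSemisimple) : ∃ g : L ≃ₗ⁅ℂ⁆ L, ⁅y, g h⁆ = 0 := by
  obtain ⟨u, hu, hhu⟩ := exists_isRegular_lie_eq_zero hh
  obtain ⟨v, hv, hyv⟩ := exists_isRegular_lie_eq_zero hy
  obtain ⟨g, hg⟩ := exists_lieEquiv_of_isRegular hu hv
  have huh : ⁅u, h⁆ = 0 := by rw [← lie_skew, hhu, neg_zero]
  have hvy : ⁅v, y⁆ = 0 := by rw [← lie_skew, hyv, neg_zero]
  exact ⟨g, lie_eq_zero_of_isRegular hv hvy ((hg h).1 huh)⟩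

end SemisimpleConjugacy

section GradedOrbit

variable {L : Type*} [LieRing L] [LieAlgebra ℂ L]

/-- The action of the `μ`-eigenspace of `ad h` on its `0`-eigenspace by the Lie bracket. -/
def eigenspaceLie (h : L) (μ : ℂ) : (ad ℂ L h).eigenspace μ →ₗ[ℂ]
    (ad ℂ L h).eigenspace 0 →ₗ[ℂ] (ad ℂ L h).eigenspace μ :=
  LinearMap.mk₂ ℂ (fun w x => ⟨⁅(w : L), (x : L)⁆, mem_eigenspace_iff.2 <| by
    simpa using lie_lie_eq_smul (mem_eigenspace_iff.1 w.2) (mem_eigenspace_iff.1 x.2)⟩)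
    (fun _ _ _ => Subtype.ext (add_lie _ _ _)) (fun _ _ _ => Subtype.ext (smul_lie _ _ _))
    (fun _ _ _ => Subtype.ext (lie_add _ _ _)) (fun _ _ _ => Subtype.ext (lie_smul _ _ _))

variable [FiniteDimensional ℂ L]

theorem exists_lieEquiv_apply_eq_of_surjective {h : L} {μ : ℂ} {a b : (ad ℂ L h).eigenspace μ}
    (ha : Function.Bijective (eigenspaceLie h μ a))
    (hb : Function.Surjective (eigenspaceLie h μ b)) :
    ∃ g : L ≃ₗ⁅ℂ⁆ L, g h = h ∧ g a = b := by
  refine rel_of_eventually_rel_add_smul (G := {a | Function.Surjective (eigenspaceLie h μ a)})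
    (r := fun a b => ∃ g : L ≃ₗ⁅ℂ⁆ L, g h = h ∧ g a = b)
    ⟨fun a => ⟨LieEquiv.refl, rfl, rfl⟩, ?_, ?_⟩ ha.2 hb ?_ fun c hc => ?_
  · rintro a b ⟨g, hgh, hg⟩
    exact ⟨g.symm, by rw [← hgh, LieEquiv.symm_apply_apply, hgh],
      by rw [← hg, LieEquiv.symm_apply_apply]⟩
  · rintro a b c ⟨g, hgh, hg⟩ ⟨g', hgh', hg'⟩
    exact ⟨g.trans g', by simp [hgh, hgh'], by simp [hg, hg']⟩
  · simpa using finite_setOf_not_surjective_add_smul ha (eigenspaceLie h μ (b - a))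
  · have hinv (z : L) (hz : z ∈ (ad ℂ L h).eigenspace 0) (w : L)
        (hw : w ∈ (ad ℂ L h).eigenspace μ) : ⁅z, w⁆ ∈ (ad ℂ L h).eigenspace μ := by
      rw [← lie_skew]
      exact neg_mem (eigenspaceLie h μ ⟨w, hw⟩ ⟨z, hz⟩).2
    have hsurj (w : L) (hw : w ∈ (ad ℂ L h).eigenspace μ) :
        ∃ z ∈ (ad ℂ L h).eigenspace 0, ∃ y ∈ (⊥ : Submodule ℂ L), ⁅z, (c : L)⁆ + y = w := by
      obtain ⟨x, hx⟩ := hc ⟨w, hw⟩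
      refine ⟨-x, neg_mem x.2, 0, zero_mem _, ?_⟩
      rw [add_zero, neg_lie, lie_skew]
      exact congrArg Subtype.val hx
    filter_upwards [eventually_exists_lieEquiv _ ⊥ _ c.2 (b - a).2 hinv bot_le hsurj]
      with t ⟨g, ⟨y, hy, hg⟩, hfix⟩ _
    rw [(Submodule.mem_bot ℂ).1 hy, add_zero] at hg
    refine ⟨g, hfix h fun z hz => ?_, hg⟩
    rw [← lie_skew, neg_eq_zero]
    simpa using mem_eigenspace_iff.1 hz

theorem Sl2.surjective_eigenspaceLie {h e f : L} (t : IsSl2Triple h e f)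
    (he : e ∈ (ad ℂ L h).eigenspace 2) :
    Function.Surjective (eigenspaceLie h 2 ⟨e, he⟩) := by
  rintro ⟨w, hw⟩
  obtain ⟨x, hx, hxw⟩ := Sl2.exists_lie_e_eq (K := ℂ) t two_pos
    (by simpa using mem_eigenspace_iff.1 hw)
  exact ⟨⟨x, mem_eigenspace_iff.2 (by simpa using hx)⟩, Subtype.ext hxw⟩

-- A dense orbit is unique: `ad e` and `ad e'` both map the `0`-eigenspace of `ad h` onto the
-- `2`-eigenspace, so the orbits of `e` and `e'` under the centralizer of `h` are both open.
theorem Sl2.exists_lieEquiv_apply_eq {h e f e' f' : L} (t : IsSl2Triple h e f)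
    (t' : IsSl2Triple h e' f') (hinj : ∀ x : L, ⁅h, x⁆ = 0 → ⁅e, x⁆ = 0 → x = 0) :
    ∃ g : L ≃ₗ⁅ℂ⁆ L, g h = h ∧ g e = e' ∧ g f = f' := by
  have he : e ∈ (ad ℂ L h).eigenspace 2 := mem_eigenspace_iff.2 (t.lie_h_e_smul ℂ)
  have he' : e' ∈ (ad ℂ L h).eigenspace 2 := mem_eigenspace_iff.2 (t'.lie_h_e_smul ℂ)
  have hker : LinearMap.ker (eigenspaceLie h 2 ⟨e, he⟩) = ⊥ := LinearMap.ker_eq_bot'.2 fun x hx =>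
    Subtype.ext (hinj x (by simpa using mem_eigenspace_iff.1 x.2) (congrArg Subtype.val hx))
  obtain ⟨g, hgh, hge⟩ := exists_lieEquiv_apply_eq_of_surjective
    ⟨LinearMap.ker_eq_bot.1 hker, Sl2.surjective_eigenspaceLie t he⟩
    (Sl2.surjective_eigenspaceLie t' he')
  refine ⟨g, hgh, hge, sub_eq_zero.1 <| Sl2.eq_zero_of_lie_e_eq_zero (K := ℂ) (m := -2) t'
    (by norm_num) ?_ ?_⟩
  · have hgf : ⁅h, g f⁆ = (-2 : ℂ) • g f := by
      rw [← map_smul, ← Sl2.lie_h_f (K := ℂ) t, LieEquiv.map_lie, hgh]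
    rw [lie_sub, hgf, Sl2.lie_h_f (K := ℂ) t', smul_sub]
    norm_num
  · rw [lie_sub, t'.lie_e_f]
    change g e = e' at hge
    rw [← hge, ← LieEquiv.map_lie, t.lie_e_f, hgh, sub_self]

end GradedOrbit

/-! ### The minuscule representation of E₆ -/

/-- An integer matrix with finitely many nonzero entries, as a formal sum of triples
`(row, column, coefficient)`. The operations on these lists are chosen so that they reduce well in
the kernel, which lets us decide identities between explicit matrices. -/
abbrev SparseMat := List (ℕ × ℕ × ℤ)

theorem natBeq_eq_decide (m n : ℕ) : m.beq n = decide (m = n) := by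
  rw [Bool.eq_iff_iff, Nat.beq_eq, decide_eq_true_eq]

namespace SparseMat

/-- The entry of a sparse matrix at position `(i, j)`. -/
def coeff (l : SparseMat) (i j : ℕ) : ℤ :=
  l.foldr (fun p a => bif p.1.beq i && p.2.1.beq j then p.2.2 + a else a) 0

/-- The multiple of a sparse matrix by an integer. -/
def scale (n : ℤ) (l : SparseMat) : SparseMat := l.map fun p => (p.1, p.2.1, n * p.2.2)

/-- The product of two sparse matrices. -/
def mul (l l' : SparseMat) : SparseMat :=
  l.flatMap fun p => (l'.filter fun q => p.2.1.beq q.1).map fun q => (p.1, q.2.1, p.2.2 * q.2.2)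

/-- The commutator of two sparse matrices. -/
def comm (l m : SparseMat) : SparseMat := mul l m ++ scale (-1) (mul m l)

/-- The transpose of a sparse matrix. -/
def transpose (l : SparseMat) : SparseMat := l.map fun p => (p.2.1, p.1, p.2.2)

/-- The test whether all entries of a sparse matrix vanish. -/
def isZero (l : SparseMat) : Bool := l.all fun p => coeff l p.1 p.2.1 == 0

/-- The entrywise product of two sparse matrices, summed over all entries. -/
def pair (d l : SparseMat) : ℤ := d.foldr (fun p a => p.2.2 * coeff l p.1 p.2.1 + a) 0

variable (R : Type*) [CommRing R]

/-- The endomorphism with matrix `l`. Using the finitely supported functions on `ℕ` as the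
underlying module avoids bounds on the indices. -/
noncomputable def toEnd (l : SparseMat) : End R (ℕ →₀ R) :=
  (l.map fun p => (p.2.2 : R) • (Finsupp.lsingle p.1 ∘ₗ Finsupp.lapply p.2.1)).sum

/-- The linear form on endomorphisms corresponding to `pair d`. -/
noncomputable def pairing (d : SparseMat) : Dual R (End R (ℕ →₀ R)) :=
  (d.map fun p => (p.2.2 : R) •
    (Finsupp.lapply p.1 ∘ₗ LinearMap.applyₗ (Finsupp.single p.2.1 (1 : R)))).sum

variable {R}

@[simp]
theorem toEnd_nil : toEnd R [] = 0 := rfl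

@[simp]
theorem toEnd_cons (p : ℕ × ℕ × ℤ) (l : SparseMat) :
    toEnd R (p :: l) = (p.2.2 : R) • (Finsupp.lsingle p.1 ∘ₗ Finsupp.lapply p.2.1) + toEnd R l := by
  simp [toEnd]

theorem toEnd_append (l l' : SparseMat) : toEnd R (l ++ l') = toEnd R l + toEnd R l' := by
  simp [toEnd]

theorem toEnd_single_apply (l : SparseMat) (i j : ℕ) :
    toEnd R l (Finsupp.single j 1) i = coeff l i j := by
  induction l with
  | nil => simp [coeff]
  | cons p l ih =>
    rw [toEnd_cons, LinearMap.add_apply, Finsupp.add_apply, ih]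
    simp only [coeff, List.foldr_cons, LinearMap.smul_apply, Finsupp.smul_apply,
      LinearMap.comp_apply, Finsupp.lapply_apply, Finsupp.lsingle_apply, Finsupp.single_apply]
    by_cases h₁ : p.1 = i <;> by_cases h₂ : j = p.2.1 <;>
      simp [natBeq_eq_decide, h₁, h₂, eq_comm]

theorem toEnd_scale (n : ℤ) (l : SparseMat) : toEnd R (scale n l) = (n : R) • toEnd R l := by
  induction l with
  | nil => simp [scale]
  | cons p l ih =>
    rw [toEnd_cons, smul_add, ← ih, smul_smul]
    simp [scale]

theorem toEnd_map_filter (p : ℕ × ℕ × ℤ) (l : SparseMat) :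
    toEnd R ((l.filter fun q => p.2.1.beq q.1).map fun q => (p.1, q.2.1, p.2.2 * q.2.2)) =
      (p.2.2 : R) • (Finsupp.lsingle p.1 ∘ₗ Finsupp.lapply p.2.1) * toEnd R l := by
  induction l with
  | nil => simp
  | cons q l ih =>
    rw [toEnd_cons, mul_add, ← ih, smul_mul_smul_comm]
    have hmul : (Finsupp.lsingle p.1 ∘ₗ Finsupp.lapply p.2.1 : End R (ℕ →₀ R)) *
        (Finsupp.lsingle q.1 ∘ₗ Finsupp.lapply q.2.1) =
          if p.2.1 = q.1 then Finsupp.lsingle p.1 ∘ₗ Finsupp.lapply q.2.1 else 0 := by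
      ext j i
      by_cases h : p.2.1 = q.1 <;> simp [h, Finsupp.single_apply, eq_comm]
    rw [hmul, List.filter_cons, natBeq_eq_decide]
    by_cases h : p.2.1 = q.1 <;> simp [h]

theorem toEnd_mul (l l' : SparseMat) : toEnd R (mul l l') = toEnd R l * toEnd R l' := by
  induction l with
  | nil => simp [mul]
  | cons p l ih =>
    rw [toEnd_cons, add_mul, ← ih, ← toEnd_map_filter, ← toEnd_append]
    rfl

theorem toEnd_comm (l l' : SparseMat) : toEnd R (comm l l') = ⁅toEnd R l, toEnd R l'⁆ := by
  rw [comm, toEnd_append, toEnd_scale, toEnd_mul, toEnd_mul, Int.cast_neg, Int.cast_one]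
  change _ = toEnd R l * toEnd R l' - toEnd R l' * toEnd R l
  module

theorem toEnd_iterate_comm (l l' : SparseMat) (n : ℕ) :
    toEnd R ((comm l)^[n] l') = (ad R (End R (ℕ →₀ R)) (toEnd R l) ^ n) (toEnd R l') := by
  induction n with
  | zero => rfl
  | succ n ih => rw [Function.iterate_succ_apply', toEnd_comm, ih, pow_succ']; rfl

theorem coeff_eq_zero_of_forall_ne {l : SparseMat} {i j : ℕ}
    (h : ∀ p ∈ l, ¬(p.1 = i ∧ p.2.1 = j)) : coeff l i j = 0 := by
  induction l with
  | nil => rfl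
  | cons p l ih =>
    have hl := ih fun q hq => h q (List.mem_cons_of_mem _ hq)
    have hp := h p List.mem_cons_self
    simp only [coeff, List.foldr_cons] at hl ⊢
    rw [hl, natBeq_eq_decide, natBeq_eq_decide, ← Bool.decide_and, decide_eq_false hp, cond_false]

theorem toEnd_eq_zero {l : SparseMat} (h : l.isZero) : toEnd R l = 0 := by
  refine Finsupp.lhom_ext' fun j => LinearMap.ext_ring <| Finsupp.ext fun i => ?_
  have hcoeff : coeff l i j = 0 := by
    by_cases hp : ∃ p ∈ l, p.1 = i ∧ p.2.1 = j
    · obtain ⟨p, hp, rfl, rfl⟩ := hp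
      exact eq_of_beq (List.all_eq_true.1 h p hp)
    · push Not at hp
      exact coeff_eq_zero_of_forall_ne fun p hpl hpij => hp p hpl hpij.1 hpij.2
  simpa [hcoeff] using toEnd_single_apply (R := R) l i j

theorem toEnd_eq_smul {l l' : SparseMat} {n : ℤ} (h : (l ++ l'.scale (-n)).isZero) :
    toEnd R l = (n : R) • toEnd R l' := by
  have hz := toEnd_eq_zero (R := R) h
  rw [toEnd_append, toEnd_scale, Int.cast_neg] at hz
  rw [← sub_eq_zero, ← hz]
  module

theorem pairing_toEnd (d l : SparseMat) : pairing R d (toEnd R l) = pair d l := by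
  induction d with
  | nil => simp [pairing, pair]
  | cons p d ih =>
    have hcons : pairing R (p :: d) = (p.2.2 : R) • (Finsupp.lapply p.1 ∘ₗ
        LinearMap.applyₗ (Finsupp.single p.2.1 (1 : R))) + pairing R d := by
      simp [pairing]
    rw [hcons, LinearMap.add_apply, ih]
    simp [toEnd_single_apply, pair]

end SparseMat

/-- The index set of a Chevalley basis of `E₆`. -/
inductive E6Index where
  /-- The `i`-th simple coroot, in the numbering of `CartanMatrix.E₆`. -/
  | cartan (i : Fin 6)
  /-- The root vector of the `n`-th positive root. -/
  | pos (n : Fin 36)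
  /-- The root vector of the negative of the `n`-th positive root. -/
  | neg (n : Fin 36)
  deriving DecidableEq, Fintype

open E6Index SparseMat

/-- The positive roots of height at least two, each as a simple root plus an earlier positive root;
the positive roots number `0, …, 5` are the simple ones. -/
def posRootParent : List (Fin 6 × Fin 36) :=
  [(2, 0), (3, 1), (3, 2), (4, 3), (5, 4), (3, 6), (2, 7), (4, 7), (4, 8), (5, 9),
   (1, 11), (4, 11), (4, 12), (5, 13), (5, 14), (4, 16), (5, 17), (3, 18), (5, 18), (3, 21),
   (5, 21), (5, 23), (2, 25), (5, 25), (4, 27), (5, 28), (4, 29), (4, 31), (3, 33), (1, 34)]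

/-- Extension of a table on the simple roots to all positive roots, following `posRootParent`. -/
def extendSimple {α : Type*} (op : α → α → α) (d : α) (l : List α) : List α :=
  posRootParent.foldl (fun t p => t ++ [op (t.getD p.1 d) (t.getD p.2 d)]) l

/-- The positive roots; the decimal digits of a number are the coefficients of the simple roots. -/
def posRoot : List ℕ := extendSimple (· + ·) 0 [100000, 10000, 1000, 100, 10, 1]

/-- The positive root vectors in the 27-dimensional representation of `E₆`. As this representation
is minuscule, a simple root vector maps each weight vector to a weight vector or to zero. -/
def posRootMat : List SparseMat := extendSimple comm []
  [[(0, 1, 1), (10, 12, 1), (13, 15, 1), (16, 17, 1), (18, 19, 1), (20, 21, 1)],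
   [(3, 4, 1), (5, 6, 1), (7, 9, 1), (18, 20, 1), (19, 21, 1), (22, 23, 1)],
   [(1, 2, 1), (8, 10, 1), (11, 13, 1), (14, 16, 1), (19, 22, 1), (21, 23, 1)],
   [(2, 3, 1), (6, 8, 1), (9, 11, 1), (16, 18, 1), (17, 19, 1), (23, 24, 1)],
   [(3, 5, 1), (4, 6, 1), (11, 14, 1), (13, 16, 1), (15, 17, 1), (24, 25, 1)],
   [(5, 7, 1), (6, 9, 1), (8, 11, 1), (10, 13, 1), (12, 15, 1), (25, 26, 1)]]

/-- The Chevalley basis of `E₆` in the 27-dimensional representation. -/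
def basisMat : E6Index → SparseMat
  | cartan i => (posRootMat.getD i []).comm (posRootMat.getD i []).transpose
  | pos n => posRootMat.getD n []
  | neg n => (posRootMat.getD n []).transpose

/-- The number of a simple root in the list of all positive roots. -/
def simpleRoot (i : Fin 6) : Fin 36 := i.castLE (by decide)

/-- The weight of a basis vector, written as in `posRoot`. -/
def weightCode : E6Index → ℤ
  | cartan _ => 0
  | pos n => posRoot.getD n 0
  | neg n => -posRoot.getD n 0

/-- The coefficient of the `i`-th simple root in the `n`-th positive root. -/
def posRootCoeff (n : Fin 36) (i : Fin 6) : ℕ := posRoot.getD n 0 / 10 ^ (5 - i : ℕ) % 10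

/-- The coefficient of the `i`-th simple root in the weight of a basis vector. -/
def rootCoeff : E6Index → Fin 6 → ℤ
  | cartan _, _ => 0
  | pos n, i => posRootCoeff n i
  | neg n, i => -posRootCoeff n i

/-- The linear form taking the value `a i` on the `i`-th simple root, evaluated at the weight of a
basis vector. -/
def labelValue {R : Type*} [CommRing R] (a : Fin 6 → R) (k : E6Index) : R :=
  ∑ i, a i * rootCoeff k i

/-- Matrices dual to the matrices `basisMat` with respect to `SparseMat.pair`. -/
def dualMat : E6Index → SparseMat
  | cartan i =>
    [[(0, 0, 1)], [(0, 0, 1), (20, 20, -1)], [(0, 0, 1), (1, 1, 1)],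
     [(0, 0, 1), (1, 1, 1), (2, 2, 1)], [(25, 25, -1), (26, 26, -1)], [(26, 26, -1)]].getD i []
  | k => (basisMat k).take 1

/-- The index of the basis vector with a given weight, which for the weight `0` is taken to be the
`i`-th simple coroot. For numbers that are not the code of a weight the value is irrelevant. -/
def indexOfCode (i : Fin 6) : ℤ → E6Index
  | 0 => cartan i
  | .ofNat c => pos (.ofNat 36 (posRoot.idxOf c))
  | .negSucc c => neg (.ofNat 36 (posRoot.idxOf (c + 1)))

/-- The index of the basis vector to which the bracket of the `i`-th simple root vector (positive
or negative according to `s`) with the `k`-th basis vector is proportional. -/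
def lieIndexOf (s : Fin 36 → E6Index) (i : Fin 6) (k : E6Index) : E6Index :=
  indexOfCode i (weightCode (s (simpleRoot i)) + weightCode k)

theorem pair_dualMat_basisMat (k l : E6Index) :
    (dualMat k).pair (basisMat l) = if k = l then 1 else 0 := by
  revert k l
  decide +kernel

theorem isZero_comm_coroot (i : Fin 6) (k : E6Index) :
    ((basisMat (cartan i)).comm (basisMat k) ++
      (basisMat k).scale (-labelValue (CartanMatrix.E₆ i) k)).isZero := by
  revert i k
  decide +kernel

theorem isZero_comm_simple {s : Fin 36 → E6Index} (hs : s = pos ∨ s = neg) (i : Fin 6)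
    (k : E6Index) :
    letI l := lieIndexOf s i k
    letI m := (basisMat (s (simpleRoot i))).comm (basisMat k)
    (m ++ (basisMat l).scale (-(dualMat l).pair m)).isZero := by
  rcases hs with rfl | rfl <;> revert i k <;> decide +kernel

theorem isZero_comm_pos_neg (i j : Fin 6) :
    ((basisMat (pos (simpleRoot i))).comm (basisMat (neg (simpleRoot j))) ++
      (basisMat (cartan i)).scale (-if i = j then 1 else 0)).isZero := by
  revert i j
  decide +kernel

theorem isZero_serre {s : Fin 36 → E6Index} (hs : s = pos ∨ s = neg) (i j : Fin 6) :
    ((basisMat (s (simpleRoot i))).comm^[(-CartanMatrix.E₆ i j).toNat]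
      ((basisMat (s (simpleRoot i))).comm (basisMat (s (simpleRoot j))))).isZero := by
  rcases hs with rfl | rfl <;> revert i j <;> decide +kernel

theorem isZero_comm_posRootParent (n : Fin 36) (hn : 6 ≤ n) :
    letI p := posRootParent.getD (n - 6 : ℕ) 0
    p.2 < n ∧
      ((basisMat (pos n)) ++
        ((basisMat (pos (simpleRoot p.1))).comm (basisMat (pos p.2))).scale (-1)).isZero ∧
      ((basisMat (neg n)) ++
        ((basisMat (neg (simpleRoot p.1))).comm (basisMat (neg p.2))).scale (- -1)).isZero := by
  revert n
  decide +kernel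

/-! ### Lie algebras of type E₆ -/

section Presentations

variable {R L L' X : Type*} [CommRing R] [LieRing L] [LieAlgebra R L] [LieRing L'] [LieAlgebra R L']

theorem exists_lieHom_quotient_mk_eq (I : LieIdeal R L) (ψ : L →ₗ⁅R⁆ L') (h : I ≤ ψ.ker) :
    ∃ χ : (L ⧸ I) →ₗ⁅R⁆ L', ∀ x, χ (LieSubmodule.Quotient.mk x : L ⧸ I) = ψ x := by
  have hle : I.toSubmodule ≤ (ψ : L →ₗ[R] L').ker := fun x hx => h hx
  let χ : (L ⧸ I) →ₗ[R] L' := I.toSubmodule.liftQ _ hle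
  have hχ (x) : χ (LieSubmodule.Quotient.mk x : L ⧸ I) = ψ x := I.toSubmodule.liftQ_apply _ _
  refine ⟨{ χ with map_lie' := fun {x y} => ?_ }, hχ⟩
  obtain ⟨x, rfl⟩ := Submodule.Quotient.mk_surjective _ x
  obtain ⟨y, rfl⟩ := Submodule.Quotient.mk_surjective _ y
  change χ ⁅LieSubmodule.Quotient.mk x, LieSubmodule.Quotient.mk y⁆ =
    ⁅χ (LieSubmodule.Quotient.mk x), χ (LieSubmodule.Quotient.mk y)⁆
  rw [← LieSubmodule.Quotient.mk_bracket, hχ, hχ, hχ, LieHom.map_lie]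

theorem range_freeLieAlgebra_lift (f : X → L) :
    (FreeLieAlgebra.lift R f).range = LieSubalgebra.lieSpan R L (Set.range f) := by
  set S := LieSubalgebra.lieSpan R L (Set.range f)
  refine le_antisymm ?_ (LieSubalgebra.lieSpan_le.2 ?_)
  · let ρ : FreeLieAlgebra R X →ₗ⁅R⁆ S :=
      FreeLieAlgebra.lift R fun x => ⟨f x, LieSubalgebra.subset_lieSpan ⟨x, rfl⟩⟩
    have hρ : S.incl.comp ρ = FreeLieAlgebra.lift R f := by
      ext x
      simp [ρ]
    rintro _ ⟨x, rfl⟩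
    exact LieHom.congr_fun hρ x ▸ (ρ x).2
  · rintro _ ⟨x, rfl⟩
    exact ⟨FreeLieAlgebra.of R x, FreeLieAlgebra.lift_of_apply f x⟩

theorem lieSpan_le_of_lie_mem {s : Set L} {W : Submodule R L} (hs : s ⊆ W)
    (hW : ∀ x ∈ s, ∀ w ∈ W, ⁅x, w⁆ ∈ W) : (LieSubalgebra.lieSpan R L s).toSubmodule ≤ W := by
  let T : LieSubalgebra R L :=
    { carrier := {x | x ∈ W ∧ ∀ w ∈ W, ⁅x, w⁆ ∈ W}
      add_mem' := fun hx hy => ⟨W.add_mem hx.1 hy.1, fun w hw => by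
        rw [add_lie]
        exact W.add_mem (hx.2 w hw) (hy.2 w hw)⟩
      zero_mem' := ⟨W.zero_mem, fun w _ => by
        rw [zero_lie]
        exact W.zero_mem⟩
      smul_mem' := fun c x hx => ⟨W.smul_mem c hx.1, fun w hw => by
        rw [smul_lie]
        exact W.smul_mem c (hx.2 w hw)⟩
      lie_mem' := fun {x y} hx hy => ⟨hx.2 y hy.1, fun w hw => by
        rw [lie_lie]
        exact W.sub_mem (hx.2 _ (hy.2 w hw)) (hy.2 _ (hx.2 w hw))⟩ }
  exact fun x hx => ((LieSubalgebra.lieSpan_le (K := T)).2 (fun y hy => ⟨hs hy, hW y hy⟩) hx).1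

theorem injective_of_exists_apply_ne_zero [IsSimple R L] (φ : L →ₗ⁅R⁆ L') {x : L} (hx : φ x ≠ 0) :
    Function.Injective φ := by
  refine (LieHom.ker_eq_bot φ).1 ((IsSimple.eq_bot_or_eq_top φ.ker).resolve_right fun htop => hx ?_)
  exact LieHom.mem_ker.1 (htop ▸ trivial)

end Presentations

section Chevalley

variable (R : Type*) [CommRing R]

/-- The Chevalley basis of `E₆` as endomorphisms. -/
noncomputable def basisEnd (k : E6Index) : End R (ℕ →₀ R) := (basisMat k).toEnd R

/-- The position of a Chevalley generator in the Chevalley basis. -/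
def generatorIndex : CartanMatrix.Generators (Fin 6) → E6Index
  | .H i => cartan i
  | .E i => pos (simpleRoot i)
  | .F i => neg (simpleRoot i)

theorem linearIndependent_basisEnd : LinearIndependent R (basisEnd R) := by
  have hdual (k l) : pairing R (dualMat k) (basisEnd R l) = if k = l then 1 else 0 := by
    rw [basisEnd, pairing_toEnd, pair_dualMat_basisMat]
    split_ifs <;> simp
  exact LinearIndependent.of_pairwise_dual_eq_zero_one (basisEnd R) (fun k => pairing R (dualMat k))
    (fun k l hkl => (hdual k l).trans (if_neg hkl)) fun k => (hdual k k).trans (if_pos rfl)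

theorem lie_coroot_basisEnd (i : Fin 6) (k : E6Index) :
    ⁅basisEnd R (cartan i), basisEnd R k⁆ =
      ((labelValue (CartanMatrix.E₆ i) k : ℤ) : R) • basisEnd R k := by
  rw [basisEnd, basisEnd, ← toEnd_comm]
  exact toEnd_eq_smul (isZero_comm_coroot i k)

theorem exists_lie_simple_basisEnd {s : Fin 36 → E6Index} (hs : s = pos ∨ s = neg) (i : Fin 6)
    (k : E6Index) :
    ∃ (c : R) (l : E6Index), ⁅basisEnd R (s (simpleRoot i)), basisEnd R k⁆ = c • basisEnd R l :=
  ⟨_, _, (toEnd_comm _ _).symm.trans (toEnd_eq_smul (isZero_comm_simple hs i k))⟩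

theorem lie_pos_neg_basisEnd (i j : Fin 6) :
    ⁅basisEnd R (pos (simpleRoot i)), basisEnd R (neg (simpleRoot j))⁆ =
      if i = j then basisEnd R (cartan i) else 0 := by
  rw [basisEnd, basisEnd, ← toEnd_comm, toEnd_eq_smul (isZero_comm_pos_neg i j), basisEnd]
  split_ifs <;> simp

theorem serre_basisEnd {s : Fin 36 → E6Index} (hs : s = pos ∨ s = neg) (i j : Fin 6) :
    (ad R (End R (ℕ →₀ R)) (basisEnd R (s (simpleRoot i))) ^ (-CartanMatrix.E₆ i j).toNat)
      ⁅basisEnd R (s (simpleRoot i)), basisEnd R (s (simpleRoot j))⁆ = 0 := by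
  rw [basisEnd, basisEnd, ← toEnd_comm, ← toEnd_iterate_comm]
  exact toEnd_eq_zero (isZero_serre hs i j)

theorem labelValue_cartan (a : Fin 6 → R) (i : Fin 6) : labelValue a (cartan i) = 0 := by
  simp [labelValue, rootCoeff]

theorem rootCoeff_simpleRoot (i j : Fin 6) :
    rootCoeff (pos (simpleRoot j)) i = if i = j then 1 else 0 := by
  revert i j
  decide +kernel

theorem labelValue_pos_simpleRoot (a : Fin 6 → R) (i : Fin 6) :
    labelValue a (pos (simpleRoot i)) = a i := by
  simp [labelValue, rootCoeff_simpleRoot]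

theorem labelValue_neg (a : Fin 6 → R) (n : Fin 36) :
    labelValue a (neg n) = -labelValue a (pos n) := by
  simp [labelValue, rootCoeff]

theorem lift_basisEnd_of_mem_toSet {x : FreeLieAlgebra R (CartanMatrix.Generators (Fin 6))}
    (hx : x ∈ CartanMatrix.Relations.toSet R CartanMatrix.E₆) :
    FreeLieAlgebra.lift R (basisEnd R ∘ generatorIndex) x = 0 := by
  set ψ := FreeLieAlgebra.lift R (basisEnd R ∘ generatorIndex)
  have hψ (g) : ψ (FreeLieAlgebra.of R g) = basisEnd R (generatorIndex g) :=
    FreeLieAlgebra.lift_of_apply _ _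
  have had (y z) (n : ℕ) : ψ ((ad R _ y ^ n) z) = (ad R _ (ψ y) ^ n) (ψ z) := by
    induction n with
    | zero => rfl
    | succ n ih => simp [pow_succ', ih]
  obtain ((((⟨⟨i, j⟩, rfl⟩ | ⟨⟨i, j⟩, rfl⟩) | ⟨⟨i, j⟩, rfl⟩) | ⟨⟨i, j⟩, rfl⟩) | ⟨⟨i, j⟩, rfl⟩) |
    ⟨⟨i, j⟩, rfl⟩ := hx
  · simp [CartanMatrix.Relations.HH, hψ, generatorIndex, lie_coroot_basisEnd, labelValue_cartan]
  · have h := lie_pos_neg_basisEnd R i j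
    by_cases hij : i = j <;>
      simp_all [CartanMatrix.Relations.EF, generatorIndex]
  · simp only [CartanMatrix.Relations.HE, Function.uncurry, Function.comp, map_sub, map_zsmul,
      LieHom.map_lie, hψ, generatorIndex, lie_coroot_basisEnd, labelValue_pos_simpleRoot]
    module
  · simp only [CartanMatrix.Relations.HF, Function.uncurry, Function.comp, map_add, map_zsmul,
      LieHom.map_lie, hψ, generatorIndex, lie_coroot_basisEnd, labelValue_neg,
      labelValue_pos_simpleRoot, Int.cast_neg]
    module
  · simp [CartanMatrix.Relations.adE, hψ, had, generatorIndex, serre_basisEnd R (.inl rfl)]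
  · simp [CartanMatrix.Relations.adF, hψ, had, generatorIndex, serre_basisEnd R (.inr rfl)]

theorem basisEnd_mem_of_generators {S : LieSubalgebra R (End R (ℕ →₀ R))}
    (hS : ∀ g, basisEnd R (generatorIndex g) ∈ S) (k : E6Index) : basisEnd R k ∈ S := by
  have hroot (n : Fin 36) : basisEnd R (pos n) ∈ S ∧ basisEnd R (neg n) ∈ S := by
    induction n using WellFoundedLT.induction with
    | ind n ih =>
      by_cases hn : 6 ≤ n
      · obtain ⟨hlt, hpos, hneg⟩ := isZero_comm_posRootParent n hn
        set p := posRootParent.getD (n - 6 : ℕ) 0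
        rw [basisEnd, basisEnd, toEnd_eq_smul hpos, toEnd_eq_smul hneg, toEnd_comm, toEnd_comm]
        exact ⟨S.smul_mem _ (S.lie_mem (hS (.E p.1)) (ih _ hlt).1),
          S.smul_mem _ (S.lie_mem (hS (.F p.1)) (ih _ hlt).2)⟩
      · obtain ⟨i, rfl⟩ : ∃ i, simpleRoot i = n := ⟨⟨n, not_le.1 hn⟩, rfl⟩
        exact ⟨hS (.E i), hS (.F i)⟩
  cases k with
  | cartan i => exact hS (.H i)
  | pos n => exact (hroot n).1
  | neg n => exact (hroot n).2

theorem exists_lie_generator_basisEnd (g : CartanMatrix.Generators (Fin 6)) (k : E6Index) :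
    ∃ (c : R) (l : E6Index),
      ⁅basisEnd R (generatorIndex g), basisEnd R k⁆ = c • basisEnd R l := by
  cases g with
  | H i => exact ⟨_, _, lie_coroot_basisEnd R i k⟩
  | E i => exact exists_lie_simple_basisEnd R (.inl rfl) i k
  | F i => exact exists_lie_simple_basisEnd R (.inr rfl) i k

theorem lieSpan_basisEnd_generatorIndex :
    (LieSubalgebra.lieSpan R (End R (ℕ →₀ R))
      (Set.range (basisEnd R ∘ generatorIndex))).toSubmodule =
        Submodule.span R (Set.range (basisEnd R)) := by
  refine le_antisymm (lieSpan_le_of_lie_mem ?_ ?_) (Submodule.span_le.2 ?_)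
  · rintro _ ⟨g, rfl⟩
    exact Submodule.subset_span ⟨_, rfl⟩
  · rintro _ ⟨g, rfl⟩ w hw
    suffices hle : Submodule.span R (Set.range (basisEnd R)) ≤
        (Submodule.span R (Set.range (basisEnd R))).comap
          (ad R (End R (ℕ →₀ R)) (basisEnd R (generatorIndex g))) from hle hw
    refine Submodule.span_le.2 ?_
    rintro _ ⟨k, rfl⟩
    obtain ⟨c, l, h⟩ := exists_lie_generator_basisEnd R g k
    rw [SetLike.mem_coe, Submodule.mem_comap, ad_apply, h]
    exact Submodule.smul_mem _ c (Submodule.subset_span ⟨l, rfl⟩)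
  · rintro _ ⟨k, rfl⟩
    exact basisEnd_mem_of_generators R
      (fun g => LieSubalgebra.subset_lieSpan (Set.mem_range_self g)) k

theorem exists_lieHom_e₆_range_eq : ∃ ρ : LieAlgebra.e₆ R →ₗ⁅R⁆ End R (ℕ →₀ R),
    ρ.range.toSubmodule = Submodule.span R (Set.range (basisEnd R)) := by
  have hle : CartanMatrix.Relations.toIdeal R CartanMatrix.E₆ ≤
      (FreeLieAlgebra.lift R (basisEnd R ∘ generatorIndex)).ker :=
    LieSubmodule.lieSpan_le.2 fun x hx => LieHom.mem_ker.2 (lift_basisEnd_of_mem_toSet R hx)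
  obtain ⟨χ, hχ⟩ := exists_lieHom_quotient_mk_eq _ _ hle
  refine ⟨χ, ?_⟩
  rw [← lieSpan_basisEnd_generatorIndex, ← range_freeLieAlgebra_lift]
  ext y
  constructor
  · rintro ⟨x, rfl⟩
    obtain ⟨x, rfl⟩ := Submodule.Quotient.mk_surjective _ x
    exact ⟨x, (hχ x).symm⟩
  · rintro ⟨x, rfl⟩
    exact ⟨_, hχ x⟩

end Chevalley

section Frame

/-- A realization of a complex Lie algebra as the Lie algebra of type `E₆` spanned by the matrices
`basisMat`. -/
structure E6Frame (L : Type*) [LieRing L] [LieAlgebra ℂ L] where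
  /-- The 27-dimensional representation, on a coordinate subspace of `ℂ^(ℕ)`. -/
  rep : L →ₗ⁅ℂ⁆ End ℂ (ℕ →₀ ℂ)
  /-- The Chevalley basis. -/
  basis : Basis E6Index ℂ L
  rep_basis : ∀ k, rep (basis k) = basisEnd ℂ k

variable {L : Type*} [LieRing L] [LieAlgebra ℂ L]

theorem nonempty_e6Frame [IsSimple ℂ L] (h : Nonempty (L ≃ₗ⁅ℂ⁆ LieAlgebra.e₆ ℂ)) :
    Nonempty (E6Frame L) := by
  obtain ⟨E⟩ := h
  obtain ⟨ρ, hρ⟩ := exists_lieHom_e₆_range_eq ℂ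
  let φ : L →ₗ⁅ℂ⁆ End ℂ (ℕ →₀ ℂ) := ρ.comp E.toLieHom
  have hφ : (φ : L →ₗ[ℂ] End ℂ (ℕ →₀ ℂ)).range = Submodule.span ℂ (Set.range (basisEnd ℂ)) := by
    rw [← hρ]
    ext y
    exact ⟨fun ⟨x, hx⟩ => ⟨E x, hx⟩, fun ⟨x, hx⟩ => ⟨E.symm x, by simpa [φ] using hx⟩⟩
  have hrange (k) : ∃ x, φ x = basisEnd ℂ k := hφ.ge (Submodule.subset_span ⟨k, rfl⟩)
  obtain ⟨x₀, hx₀⟩ := hrange (pos 0)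
  have hinj : Function.Injective φ :=
    injective_of_exists_apply_ne_zero φ (hx₀ ▸ (linearIndependent_basisEnd ℂ).ne_zero (pos 0))
  let e := (LinearEquiv.ofInjective (φ : L →ₗ[ℂ] End ℂ (ℕ →₀ ℂ)) hinj).trans (.ofEq _ _ hφ)
  have he (x) : (e x : End ℂ (ℕ →₀ ℂ)) = φ x := rfl
  refine ⟨φ, (Basis.span (linearIndependent_basisEnd ℂ)).map e.symm, fun k => ?_⟩
  rw [← he, Basis.map_apply, LinearEquiv.apply_symm_apply, Basis.span_apply]

end Frame

/-! ### Labels of sl₂-triples -/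

section Reflection

variable {K L : Type*} [Field K] [CharZero K] [LieRing L] [LieAlgebra K L]

theorem exists_lieEquiv_apply_eq_add {z : L} (hz : IsNilpotent (ad K L z)) :
    ∃ g : L ≃ₗ⁅K⁆ L, ∀ x, ⁅z, ⁅z, ⁅z, x⁆⁆⁆ = 0 →
      g x = x + ⁅z, x⁆ + (2⁻¹ : K) • ⁅z, ⁅z, x⁆⁆ := by
  let : Module ℚ L := Module.compHom L (algebraMap ℚ K)
  have : IsScalarTower ℚ K L := ⟨fun q c x => by rw [Algebra.smul_def, mul_smul]; rfl⟩
  let : LieAlgebra ℚ L :=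
    { lie_smul := fun q x y => by
        rw [← algebraMap_smul K q y, lie_smul, algebraMap_smul] }
  have hD : (LieDerivation.ad K L z).toLinearMap = ad K L z :=
    LieDerivation.coe_ad_apply_eq_ad_apply z
  refine ⟨LieDerivation.exp (LieDerivation.ad K L z) (hD ▸ hz), fun x hx => ?_⟩
  rw [LieDerivation.exp_map_apply, hD]
  refine (IsNilpotent.exp_smul_eq_sum (a := ad K L z) (m := x) (k := 3) hx hz).trans ?_
  simp [Finset.sum_range_succ, pow_two, ← algebraMap_smul K (2⁻¹ : ℚ)]

-- The automorphism is `exp (ad E) * exp (-ad F) * exp (ad E)`.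
theorem exists_lieEquiv_reflection [FiniteDimensional K L] {H E F h : L} (hEF : ⁅E, F⁆ = H)
    (hHE : ⁅H, E⁆ = (2 : K) • E) (hHF : ⁅H, F⁆ = (-2 : K) • F) {a : K} (hE : ⁅h, E⁆ = a • E)
    (hF : ⁅h, F⁆ = (-a) • F) : ∃ g : L ≃ₗ⁅K⁆ L, g h = h - a • H := by
  obtain ⟨p, hp⟩ := exists_lieEquiv_apply_eq_add
    (isNilpotent_toEnd_of_lie_eq_smul (K := K) (M := L) two_ne_zero hHE)
  obtain ⟨q, hq⟩ := exists_lieEquiv_apply_eq_add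
    (isNilpotent_toEnd_of_lie_eq_smul (K := K) (M := L) (x := -F) (neg_ne_zero.2 two_ne_zero)
      (by rw [lie_neg, hHF, smul_neg]))
  have hEh : ⁅E, h⁆ = (-a) • E := by rw [← lie_skew, hE, neg_smul]
  have hFh : ⁅F, h⁆ = a • F := by rw [← lie_skew, hF, neg_smul, neg_neg]
  have hEH : ⁅E, H⁆ = (-2 : K) • E := by rw [← lie_skew, hHE, neg_smul]
  have hFH : ⁅F, H⁆ = (2 : K) • F := by rw [← lie_skew, hHF, neg_smul, neg_neg]
  have hFE : ⁅F, E⁆ = -H := by rw [← lie_skew, hEF]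
  have hph : p h = h - a • E := by
    rw [hp h (by simp [hEh])]
    simp [hEh, sub_eq_add_neg]
  have hpE : p E = E := by
    rw [hp E (by simp)]
    simp
  have hpH : p H = H - (2 : K) • E := by
    rw [hp H (by simp [hEH])]
    simp [hEH, sub_eq_add_neg]
  have hqh : q h = h - a • F := by
    rw [hq h (by simp [hFh])]
    simp [hFh, sub_eq_add_neg]
  have hqE : q E = E + H - F := by
    rw [hq E (by simp [hFE, hFH])]
    simp only [neg_lie, lie_neg, hFE, hFH]
    module
  refine ⟨p.trans (q.trans p), ?_⟩
  have hpF : p (q h - a • q E) = h - a • H := by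
    rw [hqh, hqE, show h - a • F - a • (E + H - F) = h - a • E - a • H by module, map_sub, map_sub,
      map_smul, map_smul, hph, hpE, hpH]
    module
  rw [← hpF]
  change p (q (p h)) = _
  rw [hph, map_sub, map_smul]

end Reflection

section Diagonal

variable {K V ι : Type*} [Field K] [AddCommGroup V] [Module K V]

theorem span_range_inf_eigenspace {φ : End K V} {v : ι → V} (hv : LinearIndependent K v)
    {c : ι → K} (hφ : ∀ k, φ (v k) = c k • v k) (μ : K) :
    Submodule.span K (Set.range v) ⊓ φ.eigenspace μ = Submodule.span K (v '' {k | c k = μ}) := by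
  apply le_antisymm
  · rintro x ⟨hx, hφx⟩
    obtain ⟨a, rfl⟩ := Finsupp.mem_span_range_iff_exists_finsupp.1 hx
    have hsum : ∑ k ∈ a.support, (a k * (c k - μ)) • v k = 0 := by
      rw [← sub_eq_zero.2 (mem_eigenspace_iff.1 hφx), Finsupp.sum, map_sum, Finset.smul_sum,
        ← Finset.sum_sub_distrib]
      refine Finset.sum_congr rfl fun k _ => ?_
      rw [map_smul, hφ]
      module
    refine Submodule.sum_mem _ fun k hk => Submodule.smul_mem _ _
      (Submodule.subset_span ⟨k, sub_eq_zero.1 ?_, rfl⟩)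
    exact (mul_eq_zero.1 (linearIndependent_iff'.1 hv _ _ hsum k hk)).resolve_left
      (Finsupp.mem_support_iff.1 hk)
  · refine le_inf (Submodule.span_mono (Set.image_subset_range _ _)) (Submodule.span_le.2 ?_)
    rintro _ ⟨k, rfl, rfl⟩
    exact mem_eigenspace_iff.2 (hφ k)

theorem finrank_span_range_inf_eigenspace [Fintype ι] [DecidableEq K] {φ : End K V} {v : ι → V}
    (hv : LinearIndependent K v) {c : ι → K} (hφ : ∀ k, φ (v k) = c k • v k) (μ : K) :
    finrank K ↥(Submodule.span K (Set.range v) ⊓ φ.eigenspace μ) = Finset.card {k | c k = μ} := by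
  rw [span_range_inf_eigenspace hv hφ, Set.image_eq_range]
  exact (finrank_span_eq_card (hv.comp _ Subtype.val_injective)).trans (Fintype.card_subtype _)

theorem iSup_eigenspace_eq_top_of_basis {φ : End K V} (b : Basis ι K V) {c : ι → K}
    (hφ : ∀ k, φ (b k) = c k • b k) : ⨆ μ, φ.eigenspace μ = ⊤ := by
  rw [eq_top_iff, ← b.span_eq, Submodule.span_le]
  rintro _ ⟨k, rfl⟩
  exact Submodule.mem_iSup_of_mem (c k) (mem_eigenspace_iff.2 (hφ k))

end Diagonal

section Labels

variable {R : Type*} [CommRing R]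

theorem labelValue_intCast (a : Fin 6 → ℤ) (k : E6Index) :
    labelValue (fun i => (a i : R)) k = (labelValue a k : ℤ) := by
  simp [labelValue]

theorem labelValue_sum_mul {ι : Type*} [Fintype ι] (c : ι → R) (a : ι → Fin 6 → R) (k : E6Index) :
    labelValue (fun j => ∑ i, c i * a i j) k = ∑ i, c i * labelValue (a i) k := by
  simp only [labelValue, Finset.sum_mul, Finset.mul_sum, mul_assoc]
  exact Finset.sum_comm

theorem labelValue_sub_mul (a b : Fin 6 → R) (c : R) (k : E6Index) :
    labelValue (fun j => a j - c * b j) k = labelValue a k - c * labelValue b k := by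
  simp only [labelValue, Finset.mul_sum, ← Finset.sum_sub_distrib]
  exact Finset.sum_congr rfl fun i _ => by ring

theorem labelValue_one_ne_zero {k : E6Index} (hk : ∀ i, k ≠ cartan i) :
    labelValue (1 : Fin 6 → ℤ) k ≠ 0 := by
  have h (n : Fin 36) : labelValue (1 : Fin 6 → ℤ) (pos n) ≠ 0 := by
    revert n
    decide +kernel
  cases k with
  | cartan i => exact absurd rfl (hk i)
  | pos n => exact h n
  | neg n => rw [labelValue_neg, neg_ne_zero]; exact h n

end Labels

namespace E6Frame

variable {L : Type*} [LieRing L] [LieAlgebra ℂ L] (F : E6Frame L)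

theorem rep_injective : Function.Injective F.rep := by
  have hrep (x) : F.rep x = Finsupp.linearCombination ℂ (basisEnd ℂ) (F.basis.repr x) := by
    conv_lhs => rw [← F.basis.linearCombination_repr x]
    rw [← LieHom.coe_toLinearMap, Finsupp.apply_linearCombination]
    exact congrArg₂ _ (congrArg _ (funext F.rep_basis)) rfl
  rw [funext hrep]
  exact Function.Injective.comp (linearIndependent_basisEnd ℂ) F.basis.repr.injective

theorem lie_cartan_basis (i : Fin 6) (k : E6Index) : ⁅F.basis (cartan i), F.basis k⁆ =
    ((labelValue (CartanMatrix.E₆ i) k : ℤ) : ℂ) • F.basis k := by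
  refine F.rep_injective ?_
  rw [LieHom.map_lie, map_smul, F.rep_basis, F.rep_basis]
  exact lie_coroot_basisEnd ℂ i k

theorem lie_pos_neg_basis (i : Fin 6) : ⁅F.basis (pos (simpleRoot i)),
    F.basis (neg (simpleRoot i))⁆ = F.basis (cartan i) := by
  refine F.rep_injective ?_
  rw [LieHom.map_lie, F.rep_basis, F.rep_basis, F.rep_basis, lie_pos_neg_basisEnd, if_pos rfl]

theorem lie_basis_eq_zero {k l : E6Index} (h : ((basisMat k).comm (basisMat l)).isZero) :
    ⁅F.basis k, F.basis l⁆ = 0 := by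
  refine F.rep_injective ?_
  rw [LieHom.map_lie, F.rep_basis, F.rep_basis, basisEnd, basisEnd, ← toEnd_comm, toEnd_eq_zero h]
  exact (map_zero F.rep).symm

/-- The frame transported along an automorphism. -/
noncomputable def map (g : L ≃ₗ⁅ℂ⁆ L) : E6Frame L where
  rep := F.rep.comp g.toLieHom
  basis := F.basis.map g.symm.toLinearEquiv
  rep_basis k := by
    change F.rep (g (g.symm (F.basis k))) = _
    rw [g.apply_symm_apply, F.rep_basis]

theorem map_basis (g : L ≃ₗ⁅ℂ⁆ L) (k : E6Index) : (F.map g).basis k = g.symm (F.basis k) := rfl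

/-- The element `h` lies in the Cartan subalgebra of the frame and takes the values `a` on the
simple roots. -/
def HasLabels (h : L) (a : Fin 6 → ℂ) : Prop :=
  ∀ k, ⁅h, F.basis k⁆ = labelValue a k • F.basis k

theorem hasLabels_sum_cartan (c : Fin 6 → ℂ) : F.HasLabels (∑ i, c i • F.basis (cartan i))
    fun j => ∑ i, c i * (CartanMatrix.E₆ i j : ℤ) := fun k => by
  rw [labelValue_sum_mul, sum_lie, Finset.sum_smul]
  refine Finset.sum_congr rfl fun i _ => ?_
  rw [smul_lie, lie_cartan_basis, smul_smul, labelValue_intCast]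

theorem exists_hasLabels_one : ∃ y : L, F.HasLabels y fun _ => 1 := by
  refine ⟨_, fun k => (F.hasLabels_sum_cartan ![8, 11, 15, 21, 15, 8] k).trans ?_⟩
  congr 2 with j
  have hsum : ∑ i, (![8, 11, 15, 21, 15, 8] : Fin 6 → ℤ) i * CartanMatrix.E₆ i j = 1 := by
    revert j
    decide +kernel
  simpa [Fin.sum_univ_six] using congrArg (Int.cast : ℤ → ℂ) hsum

variable {F} {h : L} {a : Fin 6 → ℂ}

theorem HasLabels.map (ha : F.HasLabels h a) (g : L ≃ₗ⁅ℂ⁆ L) : (F.map g).HasLabels (g.symm h) a :=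
  fun k => by rw [map_basis, ← LieEquiv.map_lie, ha k, map_smul]

theorem HasLabels.lie_simple (ha : F.HasLabels h a) (i : Fin 6) :
    ⁅h, F.basis (pos (simpleRoot i))⁆ = a i • F.basis (pos (simpleRoot i)) := by
  rw [ha, labelValue_pos_simpleRoot]

theorem HasLabels.lie_neg_simple (ha : F.HasLabels h a) (i : Fin 6) :
    ⁅h, F.basis (neg (simpleRoot i))⁆ = (-a i) • F.basis (neg (simpleRoot i)) := by
  rw [ha, labelValue_neg, labelValue_pos_simpleRoot]

theorem HasLabels.isSemisimple [FiniteDimensional ℂ L] (ha : F.HasLabels h a) :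
    (ad ℂ L h).IsSemisimple :=
  isSemisimple_of_iSup_eigenspace_eq_top (iSup_eigenspace_eq_top_of_basis F.basis ha)

theorem HasLabels.mem_span_of_lie_eq_smul (ha : F.HasLabels h a) {x : L} {μ : ℂ}
    (hx : ⁅h, x⁆ = μ • x) : x ∈ Submodule.span ℂ (F.basis '' {k | labelValue a k = μ}) :=
  span_range_inf_eigenspace (φ := ad ℂ L h) F.basis.linearIndependent ha μ ▸
    ⟨F.basis.mem_span x, mem_eigenspace_iff.2 hx⟩

theorem HasLabels.exists_hasLabels (ha : F.HasLabels h fun _ => 1) {x : L} (hx : ⁅h, x⁆ = 0) :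
    ∃ a, F.HasLabels x a := by
  have hspan := ha.mem_span_of_lie_eq_smul (hx.trans (zero_smul ℂ x).symm)
  obtain ⟨c, rfl⟩ : ∃ c : Fin 6 → ℂ, ∑ i, c i • F.basis (cartan i) = x := by
    refine (Submodule.mem_span_range_iff_exists_fun ℂ).1 (Submodule.span_mono ?_ hspan)
    rintro _ ⟨k, hk, rfl⟩
    by_contra hcartan
    refine labelValue_one_ne_zero (k := k) (fun i hi => hcartan ⟨i, by rw [hi]⟩) ?_
    have hk' := (labelValue_intCast (R := ℂ) 1 k).symm
    simp only [Pi.one_apply, Int.cast_one] at hk'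
    exact_mod_cast hk'.trans hk
  exact ⟨_, F.hasLabels_sum_cartan c⟩

theorem exists_hasLabels_intCast [FiniteDimensional ℂ L] [IsKilling ℂ L] (F : E6Frame L)
    {e h f : L} (t : IsSl2Triple h e f) :
    ∃ (F' : E6Frame L) (a : Fin 6 → ℤ), F'.HasLabels h fun i => a i := by
  obtain ⟨y, hy⟩ := F.exists_hasLabels_one
  obtain ⟨g, hg⟩ := exists_lieEquiv_lie_eq_zero
    (isSemisimple_of_iSup_eigenspace_eq_top (Sl2.iSup_eigenspace_eq_top t)) hy.isSemisimple
  obtain ⟨a, ha⟩ := hy.exists_hasLabels hg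
  have ha' : (F.map g).HasLabels h a := g.symm_apply_apply h ▸ ha.map g
  choose b hb using fun i =>
    Sl2.exists_int_eq_of_lie_h_eq_smul t (ha'.lie_simple i) ((F.map g).basis.ne_zero _)
  exact ⟨F.map g, b, funext hb ▸ ha'⟩

end E6Frame

section Dominant

theorem sum_labelValue_E₆ (i : Fin 6) :
    ∑ n : Fin 36, labelValue (CartanMatrix.E₆ i) (pos n) = 2 := by
  revert i
  decide +kernel

theorem isZero_comm_neg_simple_or (n : Fin 36) (i : Fin 6) :
    ((basisMat (neg n)).comm (basisMat (pos (simpleRoot i)))).isZero ∨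
      ∀ j, rootCoeff (neg n) j + rootCoeff (pos (simpleRoot i)) j ≤ 0 := by
  revert n i
  decide +kernel

theorem labelValue_pos_nonneg {a : Fin 6 → ℤ} (ha : ∀ i, 0 ≤ a i) (n : Fin 36) :
    0 ≤ labelValue a (pos n) :=
  Finset.sum_nonneg fun i _ => mul_nonneg (ha i) (Int.natCast_nonneg _)

namespace E6Frame

variable {L : Type*} [LieRing L] [LieAlgebra ℂ L] [FiniteDimensional ℂ L] {F : E6Frame L}
  {e h f : L} {a : Fin 6 → ℤ}

-- Suppose `3 ≤ a i`. For a positive root `β` with value `2` at `h`, the difference `αᵢ - β` could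
-- only be a negative root, but its value `a i - 2` is positive. So `f` kills the `i`-th simple root
-- vector, although its weight is positive.
theorem HasLabels.le_two (ha : F.HasLabels h fun i => a i) (hpos : ∀ i, 0 ≤ a i)
    (t : IsSl2Triple h e f) (i : Fin 6) : a i ≤ 2 := by
  by_contra! hlt
  refine F.basis.ne_zero (pos (simpleRoot i))
    (Sl2.eq_zero_of_lie_f_eq_zero t (by omega) (ha.lie_simple i) ?_)
  have hf := ha.mem_span_of_lie_eq_smul (Sl2.lie_h_f (K := ℂ) t)
  clear t
  induction hf using Submodule.span_induction with
  | zero => rw [zero_lie]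
  | add x y _ _ hx hy => rw [add_lie, hx, hy, add_zero]
  | smul c x _ hx => rw [smul_lie, hx, smul_zero]
  | mem x hx =>
    obtain ⟨k, hk, rfl⟩ := hx
    replace hk : labelValue a k = -2 := by
      rw [Set.mem_ofPred_eq, labelValue_intCast] at hk
      exact_mod_cast hk
    cases k with
    | cartan j => simp [labelValue_cartan] at hk
    | pos n => exact absurd (labelValue_pos_nonneg hpos n) (by omega)
    | neg n =>
      refine F.lie_basis_eq_zero ((isZero_comm_neg_simple_or n i).resolve_right fun hle => ?_)
      have hsum : labelValue a (neg n) + labelValue a (pos (simpleRoot i)) ≤ 0 := by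
        simp only [labelValue, ← Finset.sum_add_distrib, ← mul_add, Int.cast_id]
        exact Finset.sum_nonpos fun j _ => mul_nonpos_of_nonneg_of_nonpos (hpos j) (hle j)
      rw [hk, labelValue_pos_simpleRoot] at hsum
      omega

theorem HasLabels.exists_reflection (ha : F.HasLabels h fun i => a i) (i : Fin 6) :
    ∃ F' : E6Frame L, F'.HasLabels h fun j => (a j - a i * CartanMatrix.E₆ i j : ℤ) := by
  have hH : F.HasLabels (F.basis (cartan i)) fun j => (CartanMatrix.E₆ i j : ℤ) := fun k => by
    rw [lie_cartan_basis, labelValue_intCast]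
  have hii : CartanMatrix.E₆ i i = 2 := by fin_cases i <;> rfl
  obtain ⟨g, hg⟩ := exists_lieEquiv_reflection (F.lie_pos_neg_basis i)
    (by simpa [hii] using hH.lie_simple i) (by simpa [hii] using hH.lie_neg_simple i)
    (ha.lie_simple i) (ha.lie_neg_simple i)
  refine ⟨F.map g, ?_⟩
  have hgh : F.HasLabels (g h) fun j => (a j - a i * CartanMatrix.E₆ i j : ℤ) := fun k => by
    push_cast
    rw [hg, labelValue_sub_mul, sub_lie, smul_lie, ha, hH, smul_smul, sub_smul]
  exact g.symm_apply_apply h ▸ hgh.map g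

-- In a frame maximizing the sum of the values of the positive roots at `h`, no label is negative:
-- reflecting in the `i`-th simple root changes that sum by `-2 * a i`.
theorem HasLabels.exists_nonneg (ha : F.HasLabels h fun i => a i) :
    ∃ (F' : E6Frame L) (a' : Fin 6 → ℤ), F'.HasLabels h (fun i => a' i) ∧ ∀ i, 0 ≤ a' i := by
  have hfin : {m : ℤ | HasEigenvalue (ad ℂ L h) (m : ℂ)}.Finite :=
    (Module.End.finite_hasEigenvalue (ad ℂ L h)).preimage Int.cast_injective.injOn
  obtain ⟨N, hN⟩ := hfin.bddAbove
  have hbound (F : E6Frame L) (a : Fin 6 → ℤ) (ha : F.HasLabels h fun i => a i) (k : E6Index) :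
      labelValue a k ≤ N :=
    hN <| hasEigenvalue_of_hasEigenvector (x := F.basis k)
      ⟨mem_eigenspace_iff.2 ((ha k).trans (by rw [labelValue_intCast])), F.basis.ne_zero k⟩
  obtain ⟨_, ⟨F', a', ha', rfl⟩, hmax⟩ := Int.exists_greatest_of_bdd
    (P := fun s => ∃ (F : E6Frame L) (a : Fin 6 → ℤ),
      F.HasLabels h (fun i => a i) ∧ ∑ n, labelValue a (pos n) = s)
    ⟨∑ _ : Fin 36, N, by
      rintro _ ⟨F, a, ha, rfl⟩
      exact Finset.sum_le_sum fun n _ => hbound F a ha (pos n)⟩ ⟨_, F, a, ha, rfl⟩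
  refine ⟨F', a', ha', fun i => ?_⟩
  obtain ⟨F'', hF''⟩ := ha'.exists_reflection i
  have hle := hmax _ ⟨F'', _, hF'', rfl⟩
  simp only [labelValue_sub_mul, Finset.sum_sub_distrib, ← Finset.mul_sum, sum_labelValue_E₆] at hle
  omega

end E6Frame

end Dominant

section Enumeration

/-- The number of positive roots taking the value `m` at the element with the labels `a`. The sum
is written out, which makes the kernel evaluate it several times faster. -/
def posCount (a : Fin 6 → ℕ) (m : ℤ) : ℕ :=
  Finset.card {n | ((a 0 * posRootCoeff n 0 + a 1 * posRootCoeff n 1 + a 2 * posRootCoeff n 2 +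
    a 3 * posRootCoeff n 3 + a 4 * posRootCoeff n 4 + a 5 * posRootCoeff n 5 : ℕ) : ℤ) = m}

theorem eq_of_posCount_eq {a : Fin 6 → ℕ} (hlt : ∀ i, a i < 3)
    (htwo : posCount a 2 = 6 + 2 * posCount a 0)
    (hker : posCount a 1 + (6 + 2 * posCount a 0) = 12) : a = ![2, 0, 0, 2, 0, 2] := by
  have key : ∀ a b c d e f : Fin 3,
      posCount ![a, b, c, d, e, f] 2 = 6 + 2 * posCount ![a, b, c, d, e, f] 0 →
      posCount ![a, b, c, d, e, f] 1 + (6 + 2 * posCount ![a, b, c, d, e, f] 0) = 12 →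
        (![a, b, c, d, e, f] : Fin 6 → ℕ) = ![2, 0, 0, 2, 0, 2] := by
    decide +kernel
  have ha : a = ![a 0, a 1, a 2, a 3, a 4, a 5] := by
    ext i
    fin_cases i <;> rfl
  rw [ha] at htwo hker ⊢
  exact key ⟨a 0, hlt 0⟩ ⟨a 1, hlt 1⟩ ⟨a 2, hlt 2⟩ ⟨a 3, hlt 3⟩ ⟨a 4, hlt 4⟩ ⟨a 5, hlt 5⟩ htwo hker

theorem posCount_eq_zero_of_neg (a : Fin 6 → ℕ) {m : ℤ} (hm : m < 0) : posCount a m = 0 := by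
  rw [posCount, Finset.card_eq_zero, Finset.filter_eq_empty_iff]
  exact fun n _ h => by omega

theorem sum_e6Index {M : Type*} [AddCommMonoid M] (φ : E6Index → M) :
    ∑ k, φ k = ∑ i, φ (cartan i) + (∑ n, φ (pos n) + ∑ n, φ (neg n)) := by
  let ψ : Fin 6 ⊕ Fin 36 ⊕ Fin 36 ≃ E6Index :=
    { toFun := Sum.elim cartan (Sum.elim pos neg)
      invFun
        | cartan i => .inl i
        | pos n => .inr (.inl n)
        | neg n => .inr (.inr n)
      left_inv := by rintro (i | n | n) <;> rfl
      right_inv := by rintro (i | n | n) <;> rfl }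
  rw [← ψ.sum_comp, Fintype.sum_sum_type, Fintype.sum_sum_type]
  rfl

theorem card_labelValue_eq (a : Fin 6 → ℕ) (m : ℤ) :
    Finset.card {k | labelValue (fun i => (a i : ℤ)) k = m} =
      (if m = 0 then 6 else 0) + (posCount a m + posCount a (-m)) := by
  have hpos (n : Fin 36) : ((a 0 * posRootCoeff n 0 + a 1 * posRootCoeff n 1 +
      a 2 * posRootCoeff n 2 + a 3 * posRootCoeff n 3 + a 4 * posRootCoeff n 4 +
      a 5 * posRootCoeff n 5 : ℕ) : ℤ) = labelValue (fun i => (a i : ℤ)) (pos n) := by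
    simp [labelValue, rootCoeff, Fin.sum_univ_six]
  simp only [posCount, hpos]
  simp only [Finset.card_filter, sum_e6Index, labelValue_cartan, labelValue_neg, neg_eq_iff_eq_neg]
  simp [eq_comm]

namespace E6Frame

variable {L : Type*} [LieRing L] [LieAlgebra ℂ L] {F : E6Frame L}
  {e h f : L} {a : Fin 6 → ℕ}

theorem HasLabels.finrank_eigenspace (ha : F.HasLabels h fun i => (a i : ℤ)) {m : ℤ}
    {μ : ℂ} (hm : (m : ℂ) = μ) : finrank ℂ ((toEnd ℂ L L h).eigenspace μ) =
      (if m = 0 then 6 else 0) + (posCount a m + posCount a (-m)) := by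
  classical
  subst hm
  have hcard := finrank_span_range_inf_eigenspace (φ := toEnd ℂ L L h)
    F.basis.linearIndependent ha (m : ℂ)
  rw [F.basis.span_eq, top_inf_eq] at hcard
  rw [hcard, ← card_labelValue_eq]
  simp only [labelValue_intCast, Int.cast_inj]

theorem HasLabels.eq_of_finrank_eq [FiniteDimensional ℂ L] [IsKilling ℂ L] {a : Fin 6 → ℤ}
    (ha : F.HasLabels h fun i => a i) (hpos : ∀ i, 0 ≤ a i) (t : IsSl2Triple h e f)
    (hdist : IsDistinguished L e) (hdim : finrank ℂ (centralizer L e) = 12) :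
    a = ![2, 0, 0, 2, 0, 2] := by
  lift a to Fin 6 → ℕ using hpos
  have hlt (i) : a i < 3 := Nat.lt_succ_of_le (by exact_mod_cast ha.le_two (by simp) t i)
  have hcent : LinearMap.ker (toEnd ℂ L L e) = (centralizer L e).toSubmodule := by
    ext x
    change ⁅e, x⁆ = 0 ↔ ⁅x, e⁆ = 0
    rw [← lie_skew, neg_eq_zero]
  have htwo := Sl2.finrank_eigenspace_two_eq (K := ℂ) (M := L) t
    fun x => eq_zero_of_isDistinguished hdist t
  have hker := Sl2.finrank_ker_e (K := ℂ) (M := L) t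
  rw [hcent, ha.finrank_eigenspace (m := -1) (by simp), ha.finrank_eigenspace Int.cast_zero] at hker
  rw [ha.finrank_eigenspace (m := 2) (by simp), ha.finrank_eigenspace Int.cast_zero] at htwo
  have ha' : a = ![2, 0, 0, 2, 0, 2] := eq_of_posCount_eq hlt
    (by simpa [posCount_eq_zero_of_neg, ← two_mul] using htwo)
    (by simpa [posCount_eq_zero_of_neg, ← two_mul] using hker.symm.trans hdim)
  ext i
  rw [ha']
  fin_cases i <;> rfl

end E6Frame

end Enumeration

/-! ### The sl₂-triple with labels 2, 0, 0, 2, 0, 2 -/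

section Combinations

/-- The matrix of the integral combination `∑ n • k` of basis vectors, over the pairs `(k, n)` in
a list. -/
def combMat (u : List (E6Index × ℤ)) : SparseMat := u.flatMap fun p => (basisMat p.1).scale p.2

/-- The element `h` of the standard `sl₂`-triple; its simple root values are `2, 0, 0, 2, 0, 2`. -/
def stdH : List (E6Index × ℤ) :=
  [(cartan 0, 8), (cartan 1, 10), (cartan 2, 14), (cartan 3, 20), (cartan 4, 14), (cartan 5, 8)]

/-- The element `e` of the standard `sl₂`-triple. -/
def stdE : List (E6Index × ℤ) :=
  [(pos 0, 1), (pos 6, 1), (pos 5, 1), (pos 10, 1), (pos 3, 1), (pos 18, 1)]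

/-- The element `f` of the standard `sl₂`-triple. -/
def stdF : List (E6Index × ℤ) :=
  [(neg 0, 4), (neg 3, 10), (neg 5, 4), (neg 6, 4), (neg 8, 4), (neg 9, 4), (neg 10, 4),
   (neg 12, 4), (neg 13, -4), (neg 18, 10)]

/-- A basis of the centre of the centralizer of `stdE`. -/
def centerVec : Fin 4 → List (E6Index × ℤ) :=
  ![stdE, [(pos 31, 1), (pos 32, 1)], [(pos 34, 1)], [(pos 35, 1)]]

/-- A basis of a complement of the centre in the centralizer of `stdE`. -/
def complementVec : Fin 8 → List (E6Index × ℤ) :=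
  ![[(pos 11, 1), (pos 15, -1), (pos 16, 2), (pos 17, -2), (pos 21, -1), (pos 23, -1),
     (pos 24, 1)],
    [(pos 22, -1), (pos 25, 2), (pos 26, -1), (pos 27, 1), (pos 28, 1), (pos 30, -2)],
    [(pos 17, 1), (pos 20, 1)],
    [(pos 16, -1), (pos 19, 1)],
    [(pos 22, -1), (pos 25, -1), (pos 26, -1), (pos 27, -2), (pos 28, -2), (pos 30, 1)],
    [(pos 31, 1)],
    [(pos 6, -1), (pos 8, -1), (pos 9, -1), (pos 10, -1), (pos 14, 1)],
    [(pos 0, -1), (pos 5, -1), (pos 7, -1), (pos 12, -1), (pos 13, 1)]]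

/-- The weights of the basis `centerVec` of the centre. -/
def centerWeight : Fin 4 → ℤ := ![2, 8, 10, 10]

/-- The basis vector whose coefficient detects `centerVec i` among the vectors `centerVec`. -/
def centerPivot : Fin 4 → E6Index := ![pos 3, pos 31, pos 34, pos 35]

/-- The bracket of `complementVec (complementPartner i)` with a vector of the centralizer detects
`complementVec i` by its coefficient at `complementPivot i`. -/
def complementPartner : Fin 8 → Fin 8 := ![7, 7, 7, 6, 7, 7, 7, 6]

/-- See `complementPartner`. -/
def complementPivot : Fin 8 → E6Index :=
  ![pos 22, pos 32, pos 25, pos 27, pos 31, pos 35, pos 11, pos 11]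

theorem isZero_std :
    ((combMat stdE).comm (combMat stdF) ++ (combMat stdH).scale (-1)).isZero ∧
    ((combMat stdH).comm (combMat stdE) ++ (combMat stdE).scale (-2)).isZero ∧
    ((combMat stdH).comm (combMat stdF) ++ (combMat stdF).scale (- -2)).isZero := by
  decide +kernel

theorem isZero_centerVec (j : Fin 4) (i : Fin 4 ⊕ Fin 8) :
    ((combMat (centerVec j)).comm (combMat (Sum.elim centerVec complementVec i))).isZero := by
  revert j i
  decide +kernel

theorem isZero_complementVec (i : Fin 8) :
    ((combMat (complementVec i)).comm (combMat stdE)).isZero := by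
  revert i
  decide +kernel

theorem isZero_weight (i : Fin 4) : ((combMat stdH).comm (combMat (centerVec i)) ++
    (combMat (centerVec i)).scale (-centerWeight i)).isZero := by
  revert i
  decide +kernel

theorem pair_centerPivot (i j : Fin 4) :
    (dualMat (centerPivot i)).pair (combMat (centerVec j)) = if i = j then 1 else 0 := by
  revert i j
  decide +kernel

theorem pair_complementPivot (i j : Fin 8) :
    (dualMat (complementPivot i)).pair ((combMat (complementVec (complementPartner i))).comm
      (combMat (complementVec j))) = 0 ↔ i ≠ j := by
  revert i j
  decide +kernel

theorem isZero_lie_f_centerVec (i j : Fin 4) (hi : 2 ≤ i) :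
    (((combMat stdF).comm (combMat (centerVec i))).comm (combMat (centerVec j)) ++
      (combMat (centerVec i)).scale (-if j = 0 then -10 else 0)).isZero := by
  revert i j
  decide +kernel

theorem isZero_lie_f_complementVec_castAdd (i j : Fin 4) (hi : 2 ≤ i) (hj : 1 ≤ j) :
    (((combMat stdF).comm (combMat (complementVec (i.castAdd 4)))).comm (combMat (centerVec j)) ++
      (combMat (centerVec i)).scale (-if j = 1 then 8 else 0)).isZero := by
  revert i j
  decide +kernel

theorem isZero_lie_f_complementVec_natAdd (i j : Fin 4) (hi : 2 ≤ i) (hj : 2 ≤ j) :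
    (((combMat stdF).comm (combMat (complementVec (i.natAdd 4)))).comm (combMat (centerVec j)) ++
      (combMat (centerVec i)).scale (-if i = j then 8 else -2)).isZero := by
  revert i j
  decide +kernel

end Combinations

namespace E6Frame

section Standard

variable {L : Type*} [LieRing L] [LieAlgebra ℂ L] (F : E6Frame L) {e h f : L}

/-- The integral combination `∑ n • k` of the vectors of a frame, over the pairs `(k, n)` in a
list. -/
noncomputable def comb (u : List (E6Index × ℤ)) : L := (u.map fun p => (p.2 : ℂ) • F.basis p.1).sum

theorem rep_comb (u : List (E6Index × ℤ)) : F.rep (F.comb u) = (combMat u).toEnd ℂ := by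
  induction u with
  | nil => exact map_zero F.rep
  | cons p u ih =>
    simp only [comb, combMat, List.map_cons, List.sum_cons, List.flatMap_cons] at ih ⊢
    rw [map_add, map_smul, ih, F.rep_basis, toEnd_append, toEnd_scale, basisEnd]

theorem lie_comb_eq_smul {u v w : List (E6Index × ℤ)} {n : ℤ}
    (h : ((combMat u).comm (combMat v) ++ (combMat w).scale (-n)).isZero) :
    ⁅F.comb u, F.comb v⁆ = (n : ℂ) • F.comb w := by
  refine F.rep_injective ?_
  rw [LieHom.map_lie, map_smul, rep_comb, rep_comb, rep_comb, ← toEnd_comm, toEnd_eq_smul h]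

theorem lie_comb_eq_zero {u v : List (E6Index × ℤ)}
    (h : ((combMat u).comm (combMat v)).isZero) : ⁅F.comb u, F.comb v⁆ = 0 := by
  refine F.rep_injective ?_
  rw [LieHom.map_lie, rep_comb, rep_comb, ← toEnd_comm, toEnd_eq_zero h]
  exact (map_zero F.rep).symm

theorem lie_lie_comb_eq_smul {u v w x : List (E6Index × ℤ)} {n : ℤ}
    (h : (((combMat u).comm (combMat v)).comm (combMat w) ++
      (combMat x).scale (-n)).isZero) :
    ⁅⁅F.comb u, F.comb v⁆, F.comb w⁆ = (n : ℂ) • F.comb x := by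
  refine F.rep_injective ?_
  rw [LieHom.map_lie, LieHom.map_lie, map_smul, rep_comb, rep_comb, rep_comb, rep_comb,
    ← toEnd_comm, ← toEnd_comm, toEnd_eq_smul h]

theorem map_comb (g : L ≃ₗ⁅ℂ⁆ L) (u : List (E6Index × ℤ)) :
    (F.map g).comb u = g.symm (F.comb u) := by
  induction u with
  | nil => exact (map_zero g.symm).symm
  | cons p u ih =>
    simp only [comb, List.map_cons, List.sum_cons] at ih ⊢
    rw [map_add, map_smul, ih, map_basis]

theorem hasLabels_stdH : F.HasLabels (F.comb stdH)
    fun i => ((![2, 0, 0, 2, 0, 2] : Fin 6 → ℤ) i : ℂ) := by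
  have hstd : F.comb stdH =
      ∑ i, ((![8, 10, 14, 20, 14, 8] : Fin 6 → ℤ) i : ℂ) • F.basis (cartan i) := by
    simp [comb, stdH, Fin.sum_univ_succ]
  rw [hstd]
  convert F.hasLabels_sum_cartan _ using 2 with i
  have hsum (i : Fin 6) : (![2, 0, 0, 2, 0, 2] : Fin 6 → ℤ) i =
      ∑ j, (![8, 10, 14, 20, 14, 8] : Fin 6 → ℤ) j * CartanMatrix.E₆ j i := by
    revert i
    decide +kernel
  rw [hsum]
  push_cast
  rfl

theorem isSl2Triple_std : IsSl2Triple (F.comb stdH) (F.comb stdE) (F.comb stdF) where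
  h_ne_zero h0 := by
    have hsimple := F.hasLabels_stdH.lie_simple 0
    rw [h0, zero_lie, eq_comm, smul_eq_zero] at hsimple
    exact hsimple.elim (by simp) (F.basis.ne_zero _)
  lie_e_f := by rw [F.lie_comb_eq_smul isZero_std.1, Int.cast_one, one_smul]
  lie_h_e_nsmul := by
    rw [F.lie_comb_eq_smul isZero_std.2.1]
    module
  lie_h_f_nsmul := by
    rw [F.lie_comb_eq_smul isZero_std.2.2]
    module

theorem HasLabels.unique [LieModule.IsFaithful ℂ L L] {F : E6Frame L} {a : Fin 6 → ℂ} {h h' : L}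
    (ha : F.HasLabels h a) (ha' : F.HasLabels h' a) : h = h' :=
  (toEnd_eq_iff ℂ L L).1 (F.basis.ext fun k => (ha k).trans (ha' k).symm)

theorem exists_frame_comb_eq [FiniteDimensional ℂ L] [IsKilling ℂ L] (F : E6Frame L)
    (t : IsSl2Triple h e f) (hdist : IsDistinguished L e)
    (hdim : finrank ℂ ↥(centralizer L e) = 12) :
    ∃ F : E6Frame L, F.comb stdH = h ∧ F.comb stdE = e ∧ F.comb stdF = f := by
  obtain ⟨F, a, ha⟩ := F.exists_hasLabels_intCast t
  obtain ⟨F, a, ha, hpos⟩ := ha.exists_nonneg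
  rw [ha.eq_of_finrank_eq hpos t hdist hdim] at ha
  obtain rfl := ha.unique F.hasLabels_stdH
  obtain ⟨g, hh, he, hf⟩ := Sl2.exists_lieEquiv_apply_eq t F.isSl2Triple_std
    fun x => eq_zero_of_isDistinguished hdist t
  refine ⟨F.map g, ?_, ?_, ?_⟩
  · rw [map_comb, g.symm_apply_eq, hh]
  · rw [map_comb, g.symm_apply_eq, he]
  · rw [map_comb, g.symm_apply_eq, hf]

end Standard

section Centralizer

variable {L : Type*} [LieRing L] [LieAlgebra ℂ L] (F : E6Frame L)

theorem pairing_rep_comb (d : SparseMat) (u : List (E6Index × ℤ)) :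
    pairing ℂ d (F.rep (F.comb u)) = d.pair (combMat u) := by
  rw [rep_comb, pairing_toEnd]

theorem pairing_rep_lie_comb (d : SparseMat) (u v : List (E6Index × ℤ)) :
    pairing ℂ d (F.rep ⁅F.comb u, F.comb v⁆) = d.pair ((combMat u).comm (combMat v)) := by
  rw [LieHom.map_lie, rep_comb, rep_comb, ← toEnd_comm, pairing_toEnd]

theorem lie_stdH_centerVec (i : Fin 4) :
    ⁅F.comb stdH, F.comb (centerVec i)⁆ = (centerWeight i : ℂ) • F.comb (centerVec i) :=
  F.lie_comb_eq_smul (isZero_weight i)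

theorem lie_centerVec_centerVec (i j : Fin 4) :
    ⁅F.comb (centerVec i), F.comb (centerVec j)⁆ = 0 :=
  F.lie_comb_eq_zero (isZero_centerVec i (.inl j))

theorem lie_centerVec_complementVec (i : Fin 4) (j : Fin 8) :
    ⁅F.comb (centerVec i), F.comb (complementVec j)⁆ = 0 :=
  F.lie_comb_eq_zero (isZero_centerVec i (.inr j))

theorem lie_centerVec_stdE (i : Fin 4) : ⁅F.comb (centerVec i), F.comb stdE⁆ = 0 :=
  F.lie_centerVec_centerVec i 0

theorem lie_complementVec_stdE (i : Fin 8) : ⁅F.comb (complementVec i), F.comb stdE⁆ = 0 :=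
  F.lie_comb_eq_zero (isZero_complementVec i)

theorem linearIndependent_centerVec : LinearIndependent ℂ fun i => F.comb (centerVec i) := by
  refine .of_pairwise_dual_eq_zero_one _
    (fun i => pairing ℂ (dualMat (centerPivot i)) ∘ₗ F.rep.toLinearMap) (fun i j hij => ?_)
    fun i => ?_
  · exact (F.pairing_rep_comb _ _).trans (by rw [pair_centerPivot, if_neg hij, Int.cast_zero])
  · exact (F.pairing_rep_comb _ _).trans (by rw [pair_centerPivot, if_pos rfl, Int.cast_one])

theorem eq_zero_of_lie_complementVec_eq_zero {c : Fin 4 → ℂ} {d : Fin 8 → ℂ}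
    (h : ∀ i, ⁅F.comb (complementVec i), ∑ j, c j • F.comb (centerVec j) +
      ∑ j, d j • F.comb (complementVec j)⁆ = 0) (i : Fin 8) : d i = 0 := by
  have hi : ∑ j, d j • ⁅F.comb (complementVec (complementPartner i)),
      F.comb (complementVec j)⁆ = 0 := by
    have hcenter (j : Fin 4) : ⁅F.comb (complementVec (complementPartner i)),
        F.comb (centerVec j)⁆ = 0 := by
      rw [← lie_skew, lie_centerVec_complementVec, neg_zero]
    simpa only [lie_add, lie_sum, lie_smul, hcenter, smul_zero, Finset.sum_const_zero, zero_add]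
      using h (complementPartner i)
  have hpair := congrArg (fun x => pairing ℂ (dualMat (complementPivot i)) (F.rep x)) hi
  simp only [map_sum, map_smul, pairing_rep_lie_comb, map_zero, smul_eq_mul] at hpair
  rw [Finset.sum_eq_single i (fun j _ hj => by
    rw [(pair_complementPivot i j).2 hj.symm, Int.cast_zero, mul_zero]) (by simp)] at hpair
  exact (mul_eq_zero.1 hpair).resolve_right
    (Int.cast_ne_zero.2 fun h0 => (pair_complementPivot i i).1 h0 rfl)

theorem linearIndependent_centralizer : LinearIndependent ℂ
    (Sum.elim (fun i => F.comb (centerVec i)) fun i => F.comb (complementVec i)) := by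
  rw [Fintype.linearIndependent_iff]
  intro c hc
  rw [Fintype.sum_sum_type] at hc
  have hd := F.eq_zero_of_lie_complementVec_eq_zero (c := fun i => c (.inl i))
    (d := fun i => c (.inr i)) fun i => by
      simp only [Sum.elim_inl, Sum.elim_inr] at hc
      rw [hc, lie_zero]
  simp only [Sum.elim_inl, Sum.elim_inr, hd, zero_smul, Finset.sum_const_zero, add_zero] at hc
  exact Sum.rec (Fintype.linearIndependent_iff.1 F.linearIndependent_centerVec _ hc) hd

variable [FiniteDimensional ℂ L] (hdim : finrank ℂ ↥(centralizer L (F.comb stdE)) = 12)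

include hdim

theorem exists_eq_sum_of_lie_stdE_eq_zero {x : L} (hx : ⁅x, F.comb stdE⁆ = 0) :
    ∃ (c : Fin 4 → ℂ) (d : Fin 8 → ℂ),
      ∑ i, c i • F.comb (centerVec i) + ∑ i, d i • F.comb (complementVec i) = x := by
  have hle : Submodule.span ℂ (Set.range
      (Sum.elim (fun i => F.comb (centerVec i)) fun i => F.comb (complementVec i))) ≤
      (centralizer L (F.comb stdE)).toSubmodule := by
    rw [Submodule.span_le]
    rintro _ ⟨i | i, rfl⟩
    · exact F.lie_centerVec_stdE i
    · exact F.lie_complementVec_stdE i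
  have hspan := Submodule.eq_of_le_of_finrank_eq hle
    ((finrank_span_eq_card F.linearIndependent_centralizer).trans hdim.symm)
  obtain ⟨c, rfl⟩ := (Submodule.mem_span_range_iff_exists_fun ℂ).1 (hspan.ge hx)
  exact ⟨fun i => c (.inl i), fun i => c (.inr i), by rw [Fintype.sum_sum_type]; rfl⟩

theorem zCenter_eq_span : zCenter L (F.comb stdE) =
    Submodule.span ℂ (Set.range fun i => F.comb (centerVec i)) := by
  refine le_antisymm ?_ (Submodule.span_le.2 ?_)
  · rintro v ⟨hv, hcomm⟩
    obtain ⟨c, d, rfl⟩ := F.exists_eq_sum_of_lie_stdE_eq_zero hdim hv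
    have hd := F.eq_zero_of_lie_complementVec_eq_zero fun i => by
      rw [← lie_skew, hcomm _ (F.lie_complementVec_stdE i), neg_zero]
    simp only [hd, zero_smul, Finset.sum_const_zero, add_zero]
    exact (Submodule.mem_span_range_iff_exists_fun ℂ).2 ⟨c, rfl⟩
  · rintro _ ⟨i, rfl⟩
    change InCenterOfCentralizer L _ _
    refine ⟨F.lie_centerVec_stdE i, fun y hy => ?_⟩
    obtain ⟨c, d, rfl⟩ := F.exists_eq_sum_of_lie_stdE_eq_zero hdim hy
    simp [lie_sum, lie_centerVec_centerVec, lie_centerVec_complementVec]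

theorem finrank_zCenter : finrank ℂ ↥(zCenter L (F.comb stdE)) = 4 := by
  rw [F.zCenter_eq_span hdim, finrank_span_eq_card F.linearIndependent_centerVec, Fintype.card_fin]

theorem zCenter_inf_eigenspace (μ : ℂ) :
    zCenter L (F.comb stdE) ⊓ (ad ℂ L (F.comb stdH)).eigenspace μ = Submodule.span ℂ
      ((fun i => F.comb (centerVec i)) '' {i | (centerWeight i : ℂ) = μ}) := by
  rw [F.zCenter_eq_span hdim]
  exact span_range_inf_eigenspace F.linearIndependent_centerVec F.lie_stdH_centerVec μ

theorem finrank_zCenter_inf_eigenspace : finrank ℂ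
    ↥(zCenter L (F.comb stdE) ⊓ (ad ℂ L (F.comb stdH)).eigenspace (10 : ℂ)) = 2 := by
  classical
  rw [F.zCenter_eq_span hdim]
  refine (finrank_span_range_inf_eigenspace F.linearIndependent_centerVec F.lie_stdH_centerVec
    10).trans ?_
  have hcard : Finset.card {i | centerWeight i = 10} = 2 := by decide
  exact_mod_cast hcard

theorem exists_eigenvector_iff (m : ℂ) : (∃ z : L, z ≠ 0 ∧
    InCenterOfCentralizer L (F.comb stdE) z ∧ ⁅F.comb stdH, z⁆ = m • z) ↔
      m ∈ ({2, 8, 10} : Set ℂ) := by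
  have hset : m ∈ ({2, 8, 10} : Set ℂ) ↔ ∃ i, (centerWeight i : ℂ) = m := by
    simp [centerWeight, Fin.exists_fin_succ, eq_comm]
  rw [hset]
  constructor
  · rintro ⟨z, hz, hc, hm⟩
    have hspan := (F.zCenter_inf_eigenspace hdim m).le ⟨hc, mem_eigenspace_iff.2 hm⟩
    by_contra! hne
    exact hz (by simpa [hne] using hspan)
  · rintro ⟨i, rfl⟩
    exact ⟨_, F.linearIndependent_centerVec.ne_zero i,
      (F.zCenter_eq_span hdim).ge (Submodule.subset_span ⟨i, rfl⟩), F.lie_stdH_centerVec i⟩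

end Centralizer

end E6Frame

section PropertyP

/-- The subspace `[[f, 𝔤ᵉ], v]` of property (P). -/
def bracketImage {L : Type*} [LieRing L] [LieAlgebra ℂ L] (e f v : L) : Submodule ℂ L :=
  (centralizer L e).toSubmodule.map (-(ad ℂ L v ∘ₗ ad ℂ L f))

theorem mem_bracketImage {L : Type*} [LieRing L] [LieAlgebra ℂ L] {e f v y : L} :
    y ∈ bracketImage e f v ↔ ∃ x : L, ⁅x, e⁆ = 0 ∧ ⁅⁅f, x⁆, v⁆ = y := by
  refine exists_congr fun x => and_congr_right fun _ => ?_
  rw [← lie_skew]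
  rfl

theorem mem_and_mem_of_smul_mem {K V : Type*} [Field K] [AddCommGroup V] [Module K V]
    {S : Submodule K V} {a b p q : K} {x y : V} (hq : q ≠ 0) (hpq : q ^ 2 ≠ p ^ 2)
    (hab : a ≠ 0 ∨ b ≠ 0) (hx : (a * p + b * q) • x ∈ S) (hy : (a * q + b * p) • y ∈ S)
    (hxy : a • x + b • y ∈ S) : x ∈ S ∧ y ∈ S := by
  by_cases hp : a * p + b * q = 0
  · have ha : a ≠ 0 := by
      rintro rfl
      simp_all
    have hne : a * q + b * p ≠ 0 := fun h0 =>
      mul_ne_zero ha (sub_ne_zero.2 hpq) (by linear_combination q * h0 - p * hp)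
    have hyS := (S.smul_mem_iff hne).1 hy
    exact ⟨(S.smul_mem_iff ha).1 ((S.add_mem_iff_left (S.smul_mem b hyS)).1 hxy), hyS⟩
  · have hxS := (S.smul_mem_iff hp).1 hx
    refine ⟨hxS, ?_⟩
    by_cases hb : b = 0
    · subst hb
      exact (S.smul_mem_iff (by simp_all)).1 hy
    · exact (S.smul_mem_iff hb).1 ((S.add_mem_iff_right (S.smul_mem a hxS)).1 hxy)

namespace E6Frame

variable {L : Type*} [LieRing L] [LieAlgebra ℂ L] (F : E6Frame L)

theorem centerVec_mem_bracketImage_of_zero_ne {c : Fin 4 → ℂ} (h0 : c 0 ≠ 0) {i : Fin 4}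
    (hi : 2 ≤ i) : F.comb (centerVec i) ∈
      bracketImage (F.comb stdE) (F.comb stdF) (∑ j, c j • F.comb (centerVec j)) := by
  refine ((bracketImage _ _ _).smul_mem_iff (mul_ne_zero h0 (by norm_num : (-10 : ℂ) ≠ 0))).1
    (mem_bracketImage.2 ⟨_, F.lie_centerVec_stdE i, ?_⟩)
  simp_rw [lie_sum, lie_smul, F.lie_lie_comb_eq_smul (isZero_lie_f_centerVec i _ hi)]
  simp [mul_smul]

theorem centerVec_mem_bracketImage_of_one_ne {c : Fin 4 → ℂ} (h0 : c 0 = 0) (h1 : c 1 ≠ 0)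
    {i : Fin 4} (hi : 2 ≤ i) : F.comb (centerVec i) ∈
      bracketImage (F.comb stdE) (F.comb stdF) (∑ j, c j • F.comb (centerVec j)) := by
  refine ((bracketImage _ _ _).smul_mem_iff (mul_ne_zero h1 (by norm_num : (8 : ℂ) ≠ 0))).1
    (mem_bracketImage.2 ⟨_, F.lie_complementVec_stdE (i.castAdd 4), ?_⟩)
  have hj (j : Fin 4) (hj : 1 ≤ j) :=
    F.lie_lie_comb_eq_smul (isZero_lie_f_complementVec_castAdd i j hi hj)
  rw [Fin.sum_univ_four, h0, zero_smul, zero_add]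
  simp_rw [lie_add, lie_smul, hj 1 le_rfl, hj 2 (by decide), hj 3 (by decide)]
  simp [mul_smul]

theorem centerVec_mem_bracketImage_of_two_ne_or_three_ne {c : Fin 4 → ℂ} (h0 : c 0 = 0)
    (h1 : c 1 = 0) (hc : c 2 ≠ 0 ∨ c 3 ≠ 0) {i : Fin 4} (hi : 2 ≤ i) : F.comb (centerVec i) ∈
      bracketImage (F.comb stdE) (F.comb stdF) (∑ j, c j • F.comb (centerVec j)) := by
  have hsum : ∑ j, c j • F.comb (centerVec j) =
      c 2 • F.comb (centerVec 2) + c 3 • F.comb (centerVec 3) := by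
    simp [Fin.sum_univ_four, h0, h1]
  have hlie (i : Fin 4) (hi : 2 ≤ i) :
      ⁅⁅F.comb stdF, F.comb (complementVec (i.natAdd 4))⁆, ∑ j, c j • F.comb (centerVec j)⁆ =
        (c 2 * (if i = 2 then 8 else -2 : ℤ) + c 3 * (if i = 3 then 8 else -2 : ℤ)) •
          F.comb (centerVec i) := by
    rw [hsum, lie_add, lie_smul, lie_smul,
      F.lie_lie_comb_eq_smul (isZero_lie_f_complementVec_natAdd i 2 hi le_rfl),
      F.lie_lie_comb_eq_smul (isZero_lie_f_complementVec_natAdd i 3 hi (by decide)),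
      smul_smul, smul_smul, ← add_smul]
  have h2 := mem_bracketImage.2 ⟨_, F.lie_complementVec_stdE _, hlie 2 le_rfl⟩
  have h3 := mem_bracketImage.2 ⟨_, F.lie_complementVec_stdE _, hlie 3 (by decide)⟩
  have he : (-10 : ℂ) • (c 2 • F.comb (centerVec 2) + c 3 • F.comb (centerVec 3)) ∈
      bracketImage (F.comb stdE) (F.comb stdF) (∑ j, c j • F.comb (centerVec j)) := by
    refine mem_bracketImage.2 ⟨_, lie_self (F.comb stdE), ?_⟩
    rw [← lie_skew (F.comb stdF), F.isSl2Triple_std.lie_e_f, hsum, neg_lie, lie_add, lie_smul,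
      lie_smul, lie_stdH_centerVec, lie_stdH_centerVec, neg_smul, smul_add, smul_comm (c 2),
      smul_comm (c 3)]
    simp [centerWeight]
  obtain ⟨hz2, hz3⟩ := mem_and_mem_of_smul_mem (p := (8 : ℂ)) (q := -2) (by norm_num)
    (by norm_num) hc (by simpa using h2) (by simpa using h3)
    ((Submodule.smul_mem_iff _ (by norm_num : (-10 : ℂ) ≠ 0)).1 he)
  fin_cases i
  · exact absurd hi (by decide)
  · exact absurd hi (by decide)
  · exact hz2
  · exact hz3

theorem centerVec_mem_bracketImage {c : Fin 4 → ℂ} (hc : c ≠ 0) {i : Fin 4} (hi : 2 ≤ i) :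
    F.comb (centerVec i) ∈
      bracketImage (F.comb stdE) (F.comb stdF) (∑ j, c j • F.comb (centerVec j)) := by
  by_cases h0 : c 0 = 0
  · by_cases h1 : c 1 = 0
    · refine F.centerVec_mem_bracketImage_of_two_ne_or_three_ne h0 h1 ?_ hi
      contrapose! hc
      ext j
      fin_cases j
      exacts [h0, h1, hc.1, hc.2]
    · exact F.centerVec_mem_bracketImage_of_one_ne h0 h1 hi
  · exact F.centerVec_mem_bracketImage_of_zero_ne h0 hi

theorem propertyP [FiniteDimensional ℂ L]
    (hdim : finrank ℂ ↥(centralizer L (F.comb stdE)) = 12) :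
    PropertyP L (F.comb stdE) (F.comb stdH) (F.comb stdF) := by
  intro m hm hmax v hv hv0 z hz hhz
  have hm10 : m = 10 := by
    have hle := hmax 10 ((F.exists_eigenvector_iff hdim 10).2 (by simp))
    rcases (F.exists_eigenvector_iff hdim m).1 hm with rfl | rfl | rfl
    · norm_num [Complex.le_def] at hle
    · norm_num [Complex.le_def] at hle
    · rfl
  have hz' := (F.zCenter_inf_eigenspace hdim m).le ⟨hz, mem_eigenspace_iff.2 hhz⟩
  obtain ⟨c, rfl⟩ := (Submodule.mem_span_range_iff_exists_fun ℂ).1 ((F.zCenter_eq_span hdim).le hv)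
  refine mem_bracketImage.1 (Submodule.span_le.2 ?_ hz')
  rintro _ ⟨i, hi, rfl⟩
  have hweight : ∀ i, centerWeight i = 10 → 2 ≤ i := by decide
  refine F.centerVec_mem_bracketImage (by rintro rfl; simp at hv0) (hweight i ?_)
  rw [Set.mem_ofPred_eq, hm10] at hi
  exact_mod_cast hi

end E6Frame

end PropertyP

end E6Orbit

/-- For the distinguished nilpotent orbit of `E₆` with `dim 𝔤^e = 12`:
`dim 𝔷(𝔤^e) = 4`, the eigenvalues of `ad h` on `𝔷(𝔤^e)` are `2, 8, 10` with the eigenvalue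
`10` of multiplicity `2`, and `e` satisfies property (P). -/
theorem e6_second_orbit_propertyP
    (L : Type*) [LieRing L] [LieAlgebra ℂ L] [FiniteDimensional ℂ L]
    [LieAlgebra.IsSimple ℂ L] (htype : Nonempty (L ≃ₗ⁅ℂ⁆ LieAlgebra.e₆ ℂ))
    (e h f : L) (ht : IsSl2Triple h e f) (he : IsNilpotent (LieAlgebra.ad ℂ L e))
    (hdist : IsDistinguished L e)
    (hdim : Module.finrank ℂ ↥(centralizer L e) = 12) :
    Module.finrank ℂ ↥(zCenter L e) = 4 ∧
    (∀ m : ℂ, (∃ z : L, z ≠ 0 ∧ InCenterOfCentralizer L e z ∧ ⁅h, z⁆ = m • z) ↔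
      m ∈ ({2, 8, 10} : Set ℂ)) ∧
    Module.finrank ℂ
      ↥(zCenter L e ⊓ Module.End.eigenspace (LieAlgebra.ad ℂ L h) (10 : ℂ)) = 2 ∧
    PropertyP L e h f := by
  obtain ⟨F₀⟩ := E6Orbit.nonempty_e6Frame htype
  have : LieAlgebra.IsSemisimple ℂ L := inferInstance
  have : LieAlgebra.IsKilling ℂ L := inferInstance
  obtain ⟨F, rfl, rfl, rfl⟩ := F₀.exists_frame_comb_eq ht hdist hdim
  exact ⟨F.finrank_zCenter hdim, F.exists_eigenvector_iff hdim,
    F.finrank_zCenter_inf_eigenspace hdim, F.propertyP hdim⟩
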